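/- arXiv:2503.06694 — 4 statements merged into one kernel-verified Lean document; each statement's English description precedes it below -/
import Mathlib

section
/- Let L be a simple graded ℤ-graded Lie conformal algebra as in the structure context (every nonzero component free of rank one over ℂ[∂], 0 ∈ Supp(L), L₀ abelian). Suppose k ∈ Supp(L) satisfies p_{0,k}(λ) = 0. Then there exists m ∈ Supp(L) such that p_{0,m}(λ) ≠ 0 and p_{m,k−m}(∂,λ) ≠ 0. In particular, Supp₁(L) is not empty. -/
open scoped BigOperators Classical ENNReal
open Polynomial

noncomputable section

/-- A Lie conformal algebra over `ℂ`, encoded via its `n`-th products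
`a_(n) b` and the operator `∂ = D`.  The `λ`-bracket is
`[a_λ b] = ∑ₙ (λⁿ/n!) • (a_(n) b)`. -/
structure LieConformalAlgebra (L : Type) [AddCommGroup L] [Module ℂ L] : Type where
  D : L →ₗ[ℂ] L
  prd : ℕ → L →ₗ[ℂ] L →ₗ[ℂ] L
  bound : ∀ a b : L, ∃ N : ℕ, ∀ n : ℕ, N ≤ n → prd n a b = 0
  sesq : ∀ (n : ℕ) (a b : L), prd n (D a) b = (-(n : ℂ)) • prd (n - 1) a b
  sesq' : ∀ (n : ℕ) (a b : L),
    prd n a (D b) = D (prd n a b) + (n : ℂ) • prd (n - 1) a b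
  skew : ∀ (n : ℕ) (a b : L),
    prd n a b
      = - ∑ᶠ j : ℕ, ((-1 : ℂ) ^ (n + j) * ((Nat.factorial j : ℂ))⁻¹) • (⇑D)^[j] (prd (n + j) b a)
  jacobi : ∀ (m n : ℕ) (a b c : L),
    prd m a (prd n b c) - prd n b (prd m a c)
      = ∑ j ∈ Finset.range (m + 1), (Nat.choose m j : ℂ) • prd (m + n - j) (prd j a b) c

namespace LieConformalAlgebra

variable {L : Type} [AddCommGroup L] [Module ℂ L]

/-- The action of a polynomial `q(∂) ∈ ℂ[∂]` on an element. -/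
def applyP (C : LieConformalAlgebra L) (q : Polynomial ℂ) (x : L) : L :=
  q.sum fun k c => c • (⇑C.D)^[k] x

/-- `[a_λ b] = p(∂, λ) • t`, where `p ∈ ℂ[∂][λ]` is a two-variable polynomial
(outer variable `λ`, inner variable `∂`). -/
def BracketEq (C : LieConformalAlgebra L) (a b t : L) (p : Polynomial (Polynomial ℂ)) : Prop :=
  ∀ n : ℕ, C.prd n a b = (Nat.factorial n : ℂ) • C.applyP (p.coeff n) t

def IsSubalgebra (C : LieConformalAlgebra L) (N : Submodule ℂ L) : Prop :=
  (∀ x ∈ N, C.D x ∈ N) ∧ ∀ n : ℕ, ∀ a ∈ N, ∀ b ∈ N, C.prd n a b ∈ N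

def IsIdeal (C : LieConformalAlgebra L) (N : Submodule ℂ L) : Prop :=
  (∀ x ∈ N, C.D x ∈ N) ∧ ∀ (n : ℕ) (a : L), ∀ b ∈ N, C.prd n a b ∈ N

/-- `L` is finitely generated as a Lie conformal algebra (finite type). -/
def FiniteType (C : LieConformalAlgebra L) : Prop :=
  ∃ s : Finset L, ∀ N : Submodule ℂ L, C.IsSubalgebra N → (s : Set L) ⊆ (N : Set L) → N = ⊤

/-- `L` is finitely generated as a `ℂ[∂]`-module. -/
def FGPolyModule (C : LieConformalAlgebra L) : Prop :=
  ∃ s : Finset L, ∀ N : Submodule ℂ L, (∀ x ∈ N, C.D x ∈ N) → (s : Set L) ⊆ (N : Set L) → N = ⊤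

/-- Iterated adjoint action `a₁_(k₁)(a₂_(k₂)(⋯ x))`. -/
def iterPrd (C : LieConformalAlgebra L) : List (L × ℕ) → L → L
  | [], x => x
  | (a, k) :: t, x => C.prd k a (iterPrd C t x)

/-- The `ℂ[∂]`-rank of the submodule `N` is at most `r`:
any `r+1` elements of `N` are `ℂ[∂]`-linearly dependent. -/
def polyRankLE (C : LieConformalAlgebra L) (N : Submodule ℂ L) (r : ℕ) : Prop :=
  ∀ v : Fin (r + 1) → L, (∀ k, v k ∈ N) →
    ∃ q : Fin (r + 1) → Polynomial ℂ, (∃ k, q k ≠ 0) ∧ ∑ k, C.applyP (q k) (v k) = 0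

/-- The family `v` is a free `ℂ[∂]`-basis of `L`. -/
def IsFreePolyBasis (C : LieConformalAlgebra L) {ι : Type} (v : ι → L) : Prop :=
  LinearIndependent ℂ (fun q : ι × ℕ => (⇑C.D)^[q.2] (v q.1)) ∧
  Submodule.span ℂ (Set.range fun q : ι × ℕ => (⇑C.D)^[q.2] (v q.1)) = ⊤

/-- `[U_λ V]`: the `ℂ`-span of all `u_(n) v`. -/
def bspan (C : LieConformalAlgebra L) (U V : Set L) : Submodule ℂ L :=
  Submodule.span ℂ {x : L | ∃ (n : ℕ) (u : L) (w : L), u ∈ U ∧ w ∈ V ∧ x = C.prd n u w}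

end LieConformalAlgebra

/-- `∂` as an element of `ℂ[∂][λ]`. -/
def Pd : Polynomial (Polynomial ℂ) := Polynomial.C Polynomial.X
/-- `λ` as an element of `ℂ[∂][λ]`. -/
def Pl : Polynomial (Polynomial ℂ) := Polynomial.X
/-- a constant in `ℂ[∂][λ]`. -/
def Pc (a : ℂ) : Polynomial (Polynomial ℂ) := Polynomial.C (Polynomial.C a)

/-- Total degree of a two-variable polynomial in `ℂ[∂][λ]`. -/
def tdeg (p : Polynomial (Polynomial ℂ)) : ℕ :=
  p.support.sup fun n => n + (p.coeff n).natDegree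

section ModelPolynomials

/-- structure polynomials of `𝒱(s)` -/
def pV (s : ℂ) (i j : ℤ) : Polynomial (Polynomial ℂ) :=
  Pd + Pc 2 * Pl + Pc (s * ((i : ℂ) - (j : ℂ)))

/-- structure polynomials of `CL₁(s)` -/
def pCL1 (s : ℂ) (i j : ℤ) : Polynomial (Polynomial ℂ) :=
  Pc ((i : ℂ) + 1) * Pd + Pc ((i : ℂ) + (j : ℂ) + 2) * Pl + Pc (s * ((i : ℂ) - (j : ℂ)))

/-- structure polynomials of `CL₂(b,s)` -/
def pCL2 (b s : ℂ) (i j : ℤ) : Polynomial (Polynomial ℂ) :=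
  Pc ((i : ℂ) + b) * Pd + Pc ((i : ℂ) + (j : ℂ) + 2 * b) * Pl + Pc (s * ((i : ℂ) - (j : ℂ)))

/-- structure polynomials of `SCL₂(b,s)` (for `2b ∈ ℤ`), w.r.t. the basis
`L'ᵢ = Lᵢ (i ≠ -2b)`, `L'_{-2b} = (∂+2s)L_{-2b}` of the corresponding graded
subalgebra of `CL₂(b,s)`. -/
def pSCL2 (b s : ℂ) (i j : ℤ) : Polynomial (Polynomial ℂ) :=
  (if (i : ℂ) = -(2 * b) then Pc (2 * s) - Pl else 1) *
  (if (j : ℂ) = -(2 * b) then Pd + Pl + Pc (2 * s) else 1) *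
  (if (i : ℂ) + (j : ℂ) = -(2 * b) then Pc ((i : ℂ) + b) else pCL2 b s i j)

/-- structure polynomials of `CL₃(s)` -/
def pCL3 (s : ℂ) (i j : ℤ) : Polynomial (Polynomial ℂ) :=
  if i + j = 0 then Pc (i : ℂ) * (Pd + Pc s)
  else if i = 0 then Pc (-(j : ℂ)) * (Pc (2 * s) - Pl)
  else if j = 0 then Pc (i : ℂ) * (Pd + Pl + Pc (2 * s))
  else Pc (i : ℂ) * Pd + Pc ((i : ℂ) + (j : ℂ)) * Pl + Pc (s * ((i : ℂ) - (j : ℂ)))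

/-- structure polynomials of `ECL(s)` -/
def pECL (s : ℂ) (i j : ℤ) : Polynomial (Polynomial ℂ) :=
  if i + j = 0 then Pc (i : ℂ) * (Pd + Pc s) * (Pd + Pc (2 * s))
  else if i = 0 then Pc (-(j : ℂ))
  else if j = 0 then Pc (i : ℂ)
  else Pc (i : ℂ) * Pd + Pc ((i : ℂ) + (j : ℂ)) * Pl + Pc (s * ((i : ℂ) - (j : ℂ)))

/-- structure polynomials of `M(1)` (indices `≥ -1`, completed by skew-symmetry) -/
def pM1 (i j : ℤ) : Polynomial (Polynomial ℂ) :=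
  if i = 1 ∧ j = 1 then Pd + Pc 2 * Pl
  else if i = -1 ∧ 1 ≤ j then Pc (((j : ℂ) + 1) * ((j : ℂ) - 2) / 2)
  else if j = -1 ∧ 1 ≤ i then Pc (-(((i : ℂ) + 1) * ((i : ℂ) - 2) / 2))
  else if i = 0 then Pc (-(j : ℂ))
  else if j = 0 then Pc (i : ℂ)
  else if i = 1 ∧ 2 ≤ j then 1
  else if j = 1 ∧ 2 ≤ i then -1
  else 0

/-- structure polynomials of `M(2)` (completed by skew-symmetry) -/
def pM2 (i j : ℤ) : Polynomial (Polynomial ℂ) :=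
  if i = 1 ∧ j = 1 then Pd + Pc 2 * Pl
  else if i = -1 ∧ j = -1 then Pd + Pc 2 * Pl
  else if i = 0 then Pc (-(j : ℂ))
  else if j = 0 then Pc (i : ℂ)
  else if i = -1 ∧ 1 ≤ j then Pc (((j : ℂ) + 1) * ((j : ℂ) - 2) / 2)
  else if j = -1 ∧ 1 ≤ i then Pc (-(((i : ℂ) + 1) * ((i : ℂ) - 2) / 2))
  else if i = 1 ∧ j ≤ -2 then Pc (((j : ℂ) - 1) * ((j : ℂ) + 2) / 2)
  else if j = 1 ∧ i ≤ -2 then Pc (-(((i : ℂ) - 1) * ((i : ℂ) + 2) / 2))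
  else if i = -1 ∧ j ≤ -2 then 1
  else if j = -1 ∧ i ≤ -2 then -1
  else if i = 1 ∧ 2 ≤ j then 1
  else if j = 1 ∧ 2 ≤ i then -1
  else 0

end ModelPolynomials

namespace LieConformalAlgebra

variable {L : Type} [AddCommGroup L] [Module ℂ L]

/-- `C` is isomorphic to the Virasoro Lie conformal algebra. -/
def IsVir (C : LieConformalAlgebra L) : Prop :=
  ∃ e : L, C.IsFreePolyBasis (fun _ : Unit => e) ∧ C.BracketEq e e e (Pd + Pc 2 * Pl)

/-- `C` is isomorphic to the loop Virasoro Lie conformal algebra `𝒱(s)`. -/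
def IsV (C : LieConformalAlgebra L) (s : ℂ) : Prop :=
  ∃ v : ℤ → L, C.IsFreePolyBasis v ∧
    ∀ i j : ℤ, C.BracketEq (v i) (v j) (v (i + j)) (pV s i j)

/-- `C` is isomorphic to `CL₁(s)`. -/
def IsCL1 (C : LieConformalAlgebra L) (s : ℂ) : Prop :=
  ∃ v : ℤ → L, C.IsFreePolyBasis (fun q : {i : ℤ // -1 ≤ i} => v q.1) ∧
    ∀ i j : ℤ, -1 ≤ i → -1 ≤ j →
      C.BracketEq (v i) (v j) (if -1 ≤ i + j then v (i + j) else 0) (pCL1 s i j)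

/-- `C` is isomorphic to `CL₂(b,s)`. -/
def IsCL2 (C : LieConformalAlgebra L) (b s : ℂ) : Prop :=
  ∃ v : ℤ → L, C.IsFreePolyBasis v ∧
    ∀ i j : ℤ, C.BracketEq (v i) (v j) (v (i + j)) (pCL2 b s i j)

/-- `C` is isomorphic to `SCL₂(b,s)`. -/
def IsSCL2 (C : LieConformalAlgebra L) (b s : ℂ) : Prop :=
  ∃ v : ℤ → L, C.IsFreePolyBasis v ∧
    ∀ i j : ℤ, C.BracketEq (v i) (v j) (v (i + j)) (pSCL2 b s i j)

/-- `C` is isomorphic to `CL₃(s)`. -/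
def IsCL3 (C : LieConformalAlgebra L) (s : ℂ) : Prop :=
  ∃ v : ℤ → L, C.IsFreePolyBasis v ∧
    ∀ i j : ℤ, C.BracketEq (v i) (v j) (v (i + j)) (pCL3 s i j)

/-- `C` is isomorphic to `ECL(s)`. -/
def IsECL (C : LieConformalAlgebra L) (s : ℂ) : Prop :=
  ∃ v : ℤ → L, C.IsFreePolyBasis v ∧
    ∀ i j : ℤ, C.BracketEq (v i) (v j) (v (i + j)) (pECL s i j)

/-- `C` is isomorphic to `M(1)`. -/
def IsM1 (C : LieConformalAlgebra L) : Prop :=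
  ∃ v : ℤ → L, C.IsFreePolyBasis (fun q : {i : ℤ // -1 ≤ i} => v q.1) ∧
    ∀ i j : ℤ, -1 ≤ i → -1 ≤ j →
      C.BracketEq (v i) (v j) (if -1 ≤ i + j then v (i + j) else 0) (pM1 i j)

/-- `C` is isomorphic to `M(2)`. -/
def IsM2 (C : LieConformalAlgebra L) : Prop :=
  ∃ v : ℤ → L, C.IsFreePolyBasis v ∧
    ∀ i j : ℤ, C.BracketEq (v i) (v j) (v (i + j)) (pM2 i j)

/-- `C` is isomorphic to the current Lie conformal algebra `Cur 𝔤`. -/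
def IsCur (C : LieConformalAlgebra L) (g : Type) [LieRing g] [LieAlgebra ℂ g] : Prop :=
  ∃ φ : g →ₗ[ℂ] L,
    Function.Bijective (fun f : ℕ →₀ g => f.sum fun k x => (⇑C.D)^[k] (φ x)) ∧
    (∀ x y : g, C.prd 0 (φ x) (φ y) = φ ⁅x, y⁆) ∧
    ∀ n : ℕ, 1 ≤ n → ∀ x y : g, C.prd n (φ x) (φ y) = 0

/-- `C ≅ Cur sl(2,ℂ)`. -/
def IsCurSl2 (C : LieConformalAlgebra L) : Prop :=
  C.IsCur ↥(LieAlgebra.SpecialLinear.sl (Fin 2) ℂ)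

/-- `C ≅ Cur 𝒲`, `𝒲` the Witt algebra (basis `wᵢ`, `[wᵢ,wⱼ] = (j-i)w_{i+j}`). -/
def IsCurWitt (C : LieConformalAlgebra L) : Prop :=
  ∃ v : ℤ → L, C.IsFreePolyBasis v ∧
    (∀ i j : ℤ, C.prd 0 (v i) (v j) = (((j : ℂ) - (i : ℂ))) • v (i + j)) ∧
    ∀ n : ℕ, 1 ≤ n → ∀ i j : ℤ, C.prd n (v i) (v j) = 0

/-- `C ≅ Cur 𝒲₁`, `𝒲₁` spanned by the `wᵢ`, `i ≥ -1`. -/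
def IsCurWitt1 (C : LieConformalAlgebra L) : Prop :=
  ∃ v : ℤ → L, C.IsFreePolyBasis (fun q : {i : ℤ // -1 ≤ i} => v q.1) ∧
    (∀ i j : ℤ, -1 ≤ i → -1 ≤ j →
      C.prd 0 (v i) (v j) = (((j : ℂ) - (i : ℂ))) • (if -1 ≤ i + j then v (i + j) else 0)) ∧
    ∀ n : ℕ, 1 ≤ n → ∀ i j : ℤ, -1 ≤ i → -1 ≤ j → C.prd n (v i) (v j) = 0

end LieConformalAlgebra

/-- A `ℤ`-graded Lie conformal algebra. -/
structure GradedLCA (L : Type) [AddCommGroup L] [Module ℂ L]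
    extends LieConformalAlgebra L where
  G : ℤ → Submodule ℂ L
  internal : DirectSum.IsInternal G
  dGrade : ∀ i : ℤ, ∀ x ∈ G i, D x ∈ G i
  prdGrade : ∀ (i j : ℤ) (n : ℕ), ∀ a ∈ G i, ∀ b ∈ G j, prd n a b ∈ G (i + j)

namespace GradedLCA

variable {L : Type} [AddCommGroup L] [Module ℂ L]

/-- A graded ideal: an ideal generated by homogeneous elements. -/
def IsGradedIdeal (C : GradedLCA L) (N : Submodule ℂ L) : Prop :=
  C.toLieConformalAlgebra.IsIdeal N ∧ (⨆ i : ℤ, N ⊓ C.G i) = N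

/-- `L` is simple graded: nonzero bracket, and the only graded ideals are `⊥` and `⊤`. -/
def IsSimpleGraded (C : GradedLCA L) : Prop :=
  (∃ (n : ℕ) (a b : L), C.prd n a b ≠ 0) ∧
  ∀ N : Submodule ℂ L, C.IsGradedIdeal N → N = ⊥ ∨ N = ⊤

/-- `[L_λ L] = L`. -/
def Perfect (C : GradedLCA L) : Prop :=
  Submodule.span ℂ {x : L | ∃ (n : ℕ) (a b : L), x = C.prd n a b} = ⊤

/-- Each component `L_i` is a nilpotent `L₀`-module under the adjoint action. -/
def Rootless (C : GradedLCA L) : Prop :=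
  ∀ i : ℤ, ∃ n : ℕ, 1 ≤ n ∧ ∀ l : List (L × ℕ), l.length = n →
    (∀ q ∈ l, q.1 ∈ C.G 0) → ∀ x ∈ C.G i, C.toLieConformalAlgebra.iterPrd l x = 0

/-- The ranks of the components are uniformly bounded. -/
def UniformlyBounded (C : GradedLCA L) : Prop :=
  ∃ N : ℕ, 1 ≤ N ∧ ∀ i : ℤ, C.toLieConformalAlgebra.polyRankLE (C.G i) N

end GradedLCA

/-- A module over a Lie conformal algebra, encoded via the `n`-th actions. -/
structure LCAModule {L : Type} [AddCommGroup L] [Module ℂ L] (C : LieConformalAlgebra L)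
    (M : Type) [AddCommGroup M] [Module ℂ M] : Type where
  DM : M →ₗ[ℂ] M
  act : ℕ → L →ₗ[ℂ] M →ₗ[ℂ] M
  bound : ∀ (a : L) (m : M), ∃ N : ℕ, ∀ n : ℕ, N ≤ n → act n a m = 0
  sesq : ∀ (n : ℕ) (a : L) (m : M), act n (C.D a) m = (-(n : ℂ)) • act (n - 1) a m
  sesq' : ∀ (n : ℕ) (a : L) (m : M),
    act n a (DM m) = DM (act n a m) + (n : ℂ) • act (n - 1) a m
  comm : ∀ (p q : ℕ) (a b : L) (m : M),
    act p a (act q b m) - act q b (act p a m)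
      = ∑ j ∈ Finset.range (p + 1), (Nat.choose p j : ℂ) • act (p + q - j) (C.prd j a b) m

namespace LCAModule

variable {L : Type} [AddCommGroup L] [Module ℂ L] {C : LieConformalAlgebra L}
variable {M : Type} [AddCommGroup M] [Module ℂ M]

/-- Iterated action `a₁_(k₁)(a₂_(k₂)(⋯ m))`. -/
def iterAct (ρ : LCAModule C M) : List (L × ℕ) → M → M
  | [], m => m
  | (a, k) :: t, m => ρ.act k a (iterAct ρ t m)

/-- `N` is an `L`-submodule of `M`. -/
def IsSub (ρ : LCAModule C M) (N : Submodule ℂ M) : Prop :=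
  (∀ m ∈ N, ρ.DM m ∈ N) ∧ ∀ (n : ℕ) (a : L), ∀ m ∈ N, ρ.act n a m ∈ N

/-- `M` is a nilpotent module. -/
def Nilpotent (ρ : LCAModule C M) : Prop :=
  ∃ n : ℕ, 1 ≤ n ∧ ∀ l : List (L × ℕ), l.length = n → ∀ m : M, ρ.iterAct l m = 0

/-- `M` is finitely generated as an `L`-module. -/
def FG (ρ : LCAModule C M) : Prop :=
  ∃ s : Finset M, ∀ N : Submodule ℂ M, ρ.IsSub N → (s : Set M) ⊆ (N : Set M) → N = ⊤

/-- The `L`-submodule `N` is finitely generated as an `L`-module. -/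
def FGIn (ρ : LCAModule C M) (N : Submodule ℂ M) : Prop :=
  ∃ s : Finset M, (s : Set M) ⊆ (N : Set M) ∧
    ∀ P : Submodule ℂ M, ρ.IsSub P → (s : Set M) ⊆ (P : Set M) → N ≤ P

/-- `M` is finitely generated as a `ℂ[∂]`-module. -/
def FGPoly (ρ : LCAModule C M) : Prop :=
  ∃ s : Finset M, ∀ N : Submodule ℂ M, (∀ m ∈ N, ρ.DM m ∈ N) → (s : Set M) ⊆ (N : Set M) → N = ⊤

end LCAModule

/-- A family is `ℂ[∂]`-linearly independent. -/
def polyIndep {M : Type} [AddCommGroup M] [Module ℂ M] (DM : M →ₗ[ℂ] M)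
    {r : ℕ} (v : Fin r → M) : Prop :=
  ∀ q : Fin r → Polynomial ℂ,
    (∑ k, (q k).sum fun t c => c • (⇑DM)^[t] (v k)) = 0 → ∀ k, q k = 0

/-- The `ℂ[∂]`-rank of a submodule, in `ℕ∞`. -/
def polyRank {M : Type} [AddCommGroup M] [Module ℂ M] (DM : M →ₗ[ℂ] M)
    (N : Submodule ℂ M) : ℕ∞ :=
  ⨆ r ∈ {r : ℕ | ∃ v : Fin r → M, (∀ k, v k ∈ N) ∧ polyIndep DM v}, (r : ℕ∞)

/-- A graded module over a `ℤ`-graded Lie conformal algebra. -/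
structure GradedLCAModule {L : Type} [AddCommGroup L] [Module ℂ L] (C : GradedLCA L)
    (M : Type) [AddCommGroup M] [Module ℂ M]
    extends LCAModule C.toLieConformalAlgebra M where
  GM : ℤ → Submodule ℂ M
  internal : DirectSum.IsInternal GM
  dGrade : ∀ i : ℤ, ∀ m ∈ GM i, DM m ∈ GM i
  actGrade : ∀ (i j : ℤ) (n : ℕ), ∀ a ∈ C.G i, ∀ m ∈ GM j, act n a m ∈ GM (i + j)

namespace GradedLCAModule

variable {L : Type} [AddCommGroup L] [Module ℂ L] {C : GradedLCA L}
variable {M : Type} [AddCommGroup M] [Module ℂ M]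

/-- `Mⁿ = ⊕_{|i| ≤ n} M_i`. -/
def seg (ρ : GradedLCAModule C M) (n : ℕ) : Submodule ℂ M :=
  ⨆ i : ℤ, ⨆ _ : |i| ≤ (n : ℤ), ρ.GM i

/-- `e(M) = liminf (1/n) rank_{ℂ[∂]} Mⁿ`. -/
def eM (ρ : GradedLCAModule C M) : ℝ≥0∞ :=
  Filter.atTop.liminf fun n : ℕ => (polyRank ρ.DM (ρ.seg n) : ℝ≥0∞) / (n : ℝ≥0∞)

/-- Each `M_i` is a nilpotent `L₀`-module. -/
def Weightless (ρ : GradedLCAModule C M) : Prop :=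
  ∀ i : ℤ, ∃ n : ℕ, 1 ≤ n ∧ ∀ l : List (L × ℕ), l.length = n →
    (∀ q ∈ l, q.1 ∈ C.G 0) → ∀ m ∈ ρ.GM i, ρ.toLCAModule.iterAct l m = 0

/-- The submodule `I(M)` generated by all homogeneous `v` lying in the span of
the iterated actions of `L` on `v`. -/
def IM (ρ : GradedLCAModule C M) : Submodule ℂ M :=
  sInf {N : Submodule ℂ M | ρ.toLCAModule.IsSub N ∧
    {v : M | (∃ i : ℤ, v ∈ ρ.GM i) ∧
      v ∈ Submodule.span ℂ
        {w : M | ∃ l : List (L × ℕ), 1 ≤ l.length ∧ w = ρ.toLCAModule.iterAct l v}} ⊆ N}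

end GradedLCAModule

/-- The structure context for graded Lie conformal algebras all of whose
nonzero components are free of rank one over `ℂ[∂]`: fixed homogeneous bases
`bas i` and structure polynomials `sp i j ∈ ℂ[∂][λ]`, with `0 ∈ Supp(L)` and
`L₀` abelian. -/
structure RankOneContext (L : Type) [AddCommGroup L] [Module ℂ L]
    extends GradedLCA L where
  bas : ℤ → L
  sp : ℤ → ℤ → Polynomial (Polynomial ℂ)
  bas_mem : ∀ i : ℤ, bas i ∈ G i
  bas_zero : ∀ i : ℤ, G i = ⊥ → bas i = 0
  bas_indep : ∀ i : ℤ, G i ≠ ⊥ → LinearIndependent ℂ fun k : ℕ => (⇑D)^[k] (bas i)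
  bas_span : ∀ i : ℤ, G i ≠ ⊥ →
    G i = Submodule.span ℂ (Set.range fun k : ℕ => (⇑D)^[k] (bas i))
  sp_brkt : ∀ (i j : ℤ) (n : ℕ),
    prd n (bas i) (bas j)
      = (Nat.factorial n : ℂ) • (((sp i j).coeff n).sum fun k c => c • (⇑D)^[k] (bas (i + j)))
  sp_zero : ∀ i j : ℤ, (G i = ⊥ ∨ G j = ⊥ ∨ G (i + j) = ⊥) → sp i j = 0
  supp_zero : G 0 ≠ ⊥
  abelian0 : ∀ n : ℕ, ∀ x ∈ G 0, ∀ y ∈ G 0, prd n x y = 0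

/-- A Lie conformal algebra of class `𝒱`. -/
structure ClassV (L : Type) [AddCommGroup L] [Module ℂ L]
    extends RankOneContext L where
  supp_one : G 1 ≠ ⊥
  supp_negone : G (-1) ≠ ⊥
  genV : ∀ N : Submodule ℂ L, (∀ x ∈ N, D x ∈ N) →
    (∀ n : ℕ, ∀ a ∈ N, ∀ b ∈ N, prd n a b ∈ N) →
    G 1 ≤ N → G 0 ≤ N → G (-1) ≤ N → N = ⊤
  ne_m11 : sp (-1) 1 ≠ 0
  ne_01 : sp 0 1 ≠ 0

namespace P0M

variable {L : Type} [AddCommGroup L] [Module ℂ L]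

theorem iter_mem (A : LieConformalAlgebra L) (J : Submodule ℂ L) (hJ : ∀ x ∈ J, A.D x ∈ J)
    (j : ℕ) (x : L) (hx : x ∈ J) : (⇑A.D)^[j] x ∈ J := by
  induction j with
  | zero => simpa using hx
  | succ j ih => rw [Function.iterate_succ_apply']; exact hJ _ ih

theorem skew_mem (A : LieConformalAlgebra L) (J : Submodule ℂ L) (hJ : ∀ x ∈ J, A.D x ∈ J)
    (a b : L) (h : ∀ n, A.prd n b a ∈ J) (n : ℕ) : A.prd n a b ∈ J := by
  rw [A.skew]
  apply J.neg_mem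
  apply finsum_induction (fun x => x ∈ J) J.zero_mem (fun _ _ => J.add_mem)
  intro j
  exact J.smul_mem _ (iter_mem A J hJ _ _ (h _))

theorem skew_zero (A : LieConformalAlgebra L) (a b : L) (h : ∀ n, A.prd n b a = 0) (n : ℕ) :
    A.prd n a b = 0 := by
  have := skew_mem A ⊥ (by intro x hx; simp at hx; simp [hx]) a b (by simpa using h) n
  simpa using this

theorem iter_left (A : LieConformalAlgebra L) (x y : L) (k n : ℕ) :
    A.prd n ((⇑A.D)^[k] x) y = ((-1 : ℂ) ^ k * (n.descFactorial k : ℂ)) • A.prd (n - k) x y := by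
  induction k generalizing n with
  | zero => simp
  | succ k ih =>
    rw [Function.iterate_succ_apply', A.sesq, ih, smul_smul]
    rcases n with _ | n
    · simp
    · rw [Nat.succ_descFactorial_succ]
      have : n + 1 - 1 - k = n + 1 - (k + 1) := by omega
      rw [this]
      congr 1
      push_cast
      ring

theorem iter_left_zero (A : LieConformalAlgebra L) (x y : L) (h : ∀ n, A.prd n x y = 0)
    (k n : ℕ) : A.prd n ((⇑A.D)^[k] x) y = 0 := by
  rw [iter_left, h, smul_zero]

theorem iter_right_zero (A : LieConformalAlgebra L) (x y : L) (h : ∀ n, A.prd n x y = 0)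
    (k n : ℕ) : A.prd n x ((⇑A.D)^[k] y) = 0 := by
  induction k generalizing n with
  | zero => simpa using h n
  | succ k ih => rw [Function.iterate_succ_apply', A.sesq', ih, ih]; simp

/-- cancelling a nonzero polynomial in `∂` on the left. -/
theorem cancel_left (A : LieConformalAlgebra L) (x y : L) (q : Polynomial ℂ) (hq : q ≠ 0)
    (h : ∀ n, A.prd n (q.sum fun k c => c • (⇑A.D)^[k] x) y = 0) (n : ℕ) :
    A.prd n x y = 0 := by
  obtain ⟨N, hN⟩ := A.bound x y
  have key : ∀ t n, N ≤ n + t → A.prd n x y = 0 := by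
    intro t
    induction t with
    | zero => intro n hn; exact hN n (by simpa using hn)
    | succ t ih =>
      intro n hn
      have h1 := h (n + q.natDegree)
      rw [Polynomial.sum_def, map_sum, LinearMap.sum_apply,
        Finset.sum_eq_single q.natDegree] at h1
      · rw [map_smul, LinearMap.smul_apply, iter_left, smul_smul, Nat.add_sub_cancel] at h1
        rcases smul_eq_zero.1 h1 with h2 | h2
        · exfalso
          have h3 : q.coeff q.natDegree ≠ 0 := by simpa using hq
          have h4 : ((n + q.natDegree).descFactorial q.natDegree : ℂ) ≠ 0 := by
            have : (n + q.natDegree).descFactorial q.natDegree ≠ 0 := by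
              rw [Ne, Nat.descFactorial_eq_zero_iff_lt]; omega
            exact_mod_cast this
          have h5 : ((-1 : ℂ)) ^ q.natDegree ≠ 0 := pow_ne_zero _ (by norm_num)
          exact mul_ne_zero h3 (mul_ne_zero h5 h4) h2
        · exact h2
      · intro k hk hk'
        have hlt : k < q.natDegree := lt_of_le_of_ne (Polynomial.le_natDegree_of_mem_supp _ hk) hk'
        rw [map_smul, LinearMap.smul_apply, iter_left, ih _ (by omega)]
        simp
      · intro hk
        exact absurd (Polynomial.natDegree_mem_support_of_nonzero hq) hk
  exact key N n (by omega)

theorem sp_eq_zero_iff (C : RankOneContext L) (i j : ℤ) :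
    C.sp i j = 0 ↔ ∀ n, ∀ x ∈ C.G i, ∀ y ∈ C.G j, C.prd n x y = 0 := by
  constructor
  · intro h n x hx y hy
    have hb : ∀ n, C.prd n (C.bas i) (C.bas j) = 0 := by
      intro n; rw [C.sp_brkt, h]; simp
    by_cases hi : C.G i = ⊥
    · rw [hi] at hx; simp at hx; simp [hx]
    by_cases hj : C.G j = ⊥
    · rw [hj] at hy; simp at hy; simp [hy]
    rw [C.bas_span i hi] at hx
    rw [C.bas_span j hj] at hy
    induction hx using Submodule.span_induction with
    | zero => simp
    | add a b _ _ ha hb => simp [ha, hb]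
    | smul c a _ ha => simp [ha]
    | mem x hx =>
      obtain ⟨k, rfl⟩ := hx
      induction hy using Submodule.span_induction with
      | zero => simp
      | add a b _ _ ha hb => simp [ha, hb]
      | smul c a _ ha => simp [ha]
      | mem y hy =>
        obtain ⟨l, rfl⟩ := hy
        exact iter_left_zero C.toLieConformalAlgebra _ _
          (fun n => iter_right_zero C.toLieConformalAlgebra _ _ hb l n) k n
  · intro h
    by_cases hij : C.G (i + j) = ⊥
    · exact C.sp_zero i j (Or.inr (Or.inr hij))
    ext1 n
    have h1 := C.sp_brkt i j n
    rw [h n _ (C.bas_mem i) _ (C.bas_mem j)] at h1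
    have h2 := (smul_eq_zero.1 h1.symm).resolve_left (by exact_mod_cast n.factorial_ne_zero)
    have h3 := C.bas_indep (i + j) hij
    rw [linearIndependent_iff'] at h3
    rw [Polynomial.sum_def] at h2
    have h4 := h3 _ _ h2
    ext k
    by_contra hne
    exact hne (by simpa using h4 k (by simpa using hne))

theorem key (C : RankOneContext L) (i j : ℤ) (hi : C.sp 0 i ≠ 0) (hj : C.sp 0 j = 0)
    (hij : C.sp 0 (i + j) = 0) : C.sp i j = 0 := by
  have main : ∀ y ∈ C.G j, ∀ n, C.prd n (C.bas i) y = 0 := by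
    intro y hy
    have hbr : ∀ m n, C.prd n (C.prd m (C.bas 0) (C.bas i)) y = 0 := by
      intro m
      induction m using Nat.strong_induction_on with
      | _ m ih =>
        intro n
        have h := C.jacobi m n (C.bas 0) (C.bas i) y
        rw [(sp_eq_zero_iff C _ _).1 hij _ _ (C.bas_mem 0) _
            (C.prdGrade _ _ _ _ (C.bas_mem i) _ hy),
          (sp_eq_zero_iff C _ _).1 hj _ _ (C.bas_mem 0) _ hy, map_zero, sub_zero,
          Finset.sum_range_succ, Finset.sum_eq_zero] at h
        · simpa using h.symm
        · intro l hl
          rw [ih l (Finset.mem_range.1 hl), smul_zero]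
    obtain ⟨m, hm⟩ : ∃ m, (C.sp 0 i).coeff m ≠ 0 := by
      by_contra hcon
      push Not at hcon
      exact hi (by ext1 m; simpa using hcon m)
    apply cancel_left C.toLieConformalAlgebra _ _ _ hm
    intro n
    have h := hbr m n
    rw [C.sp_brkt, zero_add, map_smul, LinearMap.smul_apply] at h
    exact (smul_eq_zero.1 h).resolve_left (by exact_mod_cast m.factorial_ne_zero)
  rw [sp_eq_zero_iff]
  intro n x hx y hy
  by_cases hb : C.G i = ⊥
  · rw [hb] at hx; simp at hx; simp [hx]
  rw [C.bas_span i hb] at hx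
  induction hx using Submodule.span_induction with
  | zero => simp
  | add a b _ _ ha hb => simp [ha, hb]
  | smul c a _ ha => simp [ha]
  | mem x hx =>
    obtain ⟨k, rfl⟩ := hx
    exact iter_left_zero C.toLieConformalAlgebra _ _ (main y hy) k n

def gens (C : RankOneContext L) : Set L :=
  {z | (∃ i, C.sp 0 i ≠ 0 ∧ z ∈ C.G i) ∨
    ∃ i j, C.sp 0 i ≠ 0 ∧ C.sp 0 j ≠ 0 ∧ ∃ x ∈ C.G i, ∃ y ∈ C.G j, ∃ n, z = C.prd n x y}

def J (C : RankOneContext L) : Submodule ℂ L := Submodule.span ℂ (gens C)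

theorem J_D (C : RankOneContext L) : ∀ x ∈ J C, C.D x ∈ J C := by
  intro x hx
  induction hx using Submodule.span_induction with
  | zero => simp
  | add a b _ _ ha hb => rw [map_add]; exact add_mem ha hb
  | smul c a _ ha => rw [map_smul]; exact Submodule.smul_mem _ _ ha
  | mem x hx =>
    rcases hx with ⟨i, hi, hz⟩ | ⟨i, j, hi, hj, x, hx, y, hy, n, rfl⟩
    · exact Submodule.subset_span (Or.inl ⟨i, hi, C.dGrade _ _ hz⟩)
    · have h := C.sesq' n x y
      rw [eq_comm, ← eq_sub_iff_add_eq] at h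
      rw [h]
      refine sub_mem ?_ (Submodule.smul_mem _ _ ?_)
      · exact Submodule.subset_span (Or.inr ⟨i, j, hi, hj, x, hx, _, C.dGrade _ _ hy, n, rfl⟩)
      · exact Submodule.subset_span (Or.inr ⟨i, j, hi, hj, x, hx, _, hy, _, rfl⟩)

theorem iSup_top (C : RankOneContext L) : (⨆ i, C.G i) = ⊤ :=
  C.internal.submodule_iSup_eq_top

theorem J_left (C : RankOneContext L) (i : ℤ) (hi : C.sp 0 i ≠ 0) (x : L) (hx : x ∈ C.G i)
    (n : ℕ) (y : L) : C.prd n x y ∈ J C := by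
  have hy : y ∈ ⨆ i, C.G i := by rw [iSup_top]; trivial
  induction hy using Submodule.iSup_induction' with
  | zero => simp
  | add a b _ _ ha hb => rw [map_add]; exact add_mem ha hb
  | mem j y hy =>
    by_cases hij : C.sp 0 (i + j) = 0
    · by_cases hj : C.sp 0 j = 0
      · rw [(sp_eq_zero_iff C i j).1 (key C i j hi hj hij) n x hx y hy]
        exact zero_mem _
      · exact Submodule.subset_span (Or.inr ⟨i, j, hi, hj, x, hx, _, hy, _, rfl⟩)
    · exact Submodule.subset_span (Or.inl ⟨i + j, hij, C.prdGrade _ _ _ _ hx _ hy⟩)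

theorem J_right (C : RankOneContext L) (i : ℤ) (hi : C.sp 0 i ≠ 0) (x : L) (hx : x ∈ C.G i)
    (n : ℕ) (y : L) : C.prd n y x ∈ J C :=
  skew_mem C.toLieConformalAlgebra (J C) (J_D C) y x (fun n => J_left C i hi x hx n y) n

theorem graded_of_gens (C : RankOneContext L) (s : Set L) (hs : ∀ x ∈ s, ∃ i, x ∈ C.G i) :
    (⨆ i : ℤ, Submodule.span ℂ s ⊓ C.G i) = Submodule.span ℂ s := by
  apply le_antisymm
  · exact iSup_le fun i => inf_le_left
  · rw [Submodule.span_le]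
    intro x hx
    obtain ⟨i, hi⟩ := hs x hx
    exact Submodule.mem_iSup_of_mem i ⟨Submodule.subset_span hx, hi⟩

theorem J_ideal (C : RankOneContext L) : C.toGradedLCA.IsGradedIdeal (J C) := by
  refine ⟨⟨J_D C, ?_⟩, graded_of_gens C _ ?_⟩
  · intro m a b hb
    induction hb using Submodule.span_induction with
    | zero => simp
    | add a b _ _ ha hb => rw [map_add]; exact add_mem ha hb
    | smul c a _ ha => rw [map_smul]; exact Submodule.smul_mem _ _ ha
    | mem x hx =>
      rcases hx with ⟨i, hi, hz⟩ | ⟨i, j, hi, hj, x, hx, y, hy, n, rfl⟩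
      · exact J_right C i hi x hz m a
      · have h := C.jacobi m n a x y
        rw [sub_eq_iff_eq_add] at h
        rw [h]
        refine add_mem (sum_mem fun l _ => Submodule.smul_mem _ _ ?_) ?_
        · exact J_right C j hj y hy _ _
        · exact J_left C i hi x hx _ _
  · intro x hx
    rcases hx with ⟨i, hi, hz⟩ | ⟨i, j, hi, hj, x, hx, y, hy, n, rfl⟩
    · exact ⟨i, hz⟩
    · exact ⟨i + j, C.prdGrade _ _ _ _ hx _ hy⟩

theorem J_top (C : RankOneContext L) (hs : C.toGradedLCA.IsSimpleGraded) : J C = ⊤ := by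
  refine (hs.2 _ (J_ideal C)).resolve_left fun hbot => ?_
  have h0 : ∀ i, C.sp 0 i = 0 := by
    intro i
    by_contra hi
    apply hi
    refine C.sp_zero 0 i (Or.inr (Or.inl ?_))
    rw [eq_bot_iff, ← hbot]
    intro x hx
    exact Submodule.subset_span (Or.inl ⟨i, hi, hx⟩)
  have hz : ∀ n, ∀ x ∈ C.G 0, ∀ y, C.prd n x y = 0 := by
    intro n x hx y
    have hy : y ∈ ⨆ i, C.G i := by rw [iSup_top]; trivial
    induction hy using Submodule.iSup_induction' with
    | zero => simp
    | add a b _ _ ha hb => rw [map_add, ha, hb, add_zero]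
    | mem j y hy => exact (sp_eq_zero_iff C 0 j).1 (h0 j) n x hx y hy
  have hid : C.toGradedLCA.IsGradedIdeal (C.G 0) := by
    refine ⟨⟨C.dGrade 0, ?_⟩, ?_⟩
    · intro n a b hb
      rw [skew_zero C.toLieConformalAlgebra a b (fun n => hz n b hb a) n]
      exact zero_mem _
    · have := graded_of_gens C (C.G 0 : Set L) (fun x hx => ⟨0, hx⟩)
      rwa [Submodule.span_eq] at this
  rcases hs.2 _ hid with h | h
  · exact C.supp_zero h
  · obtain ⟨n, a, b, hab⟩ := hs.1
    exact hab (hz n a (by rw [h]; trivial) b)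

theorem first (C : RankOneContext L) (hs : C.toGradedLCA.IsSimpleGraded)
    (k : ℤ) (hk : C.G k ≠ ⊥) (h0k : C.sp 0 k = 0) :
    ∃ m : ℤ, C.G m ≠ ⊥ ∧ C.sp 0 m ≠ 0 ∧ C.sp m (k - m) ≠ 0 := by
  by_contra hcon
  push Not at hcon
  have hle : J C ≤ ⨆ i, ⨆ (_ : i ≠ k), C.G i := by
    rw [J, Submodule.span_le]
    have hin : ∀ i x, x ∈ C.G i → i ≠ k → x ∈ ⨆ i, ⨆ (_ : i ≠ k), C.G i := by
      intro i x hx hik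
      exact Submodule.mem_iSup_of_mem i (Submodule.mem_iSup_of_mem hik hx)
    intro z hz
    rcases hz with ⟨i, hi, hz⟩ | ⟨i, j, hi, hj, x, hx, y, hy, n, rfl⟩
    · exact hin i z hz (by rintro rfl; exact hi h0k)
    · by_cases hij : i + j = k
      · have hi0 : C.G i ≠ ⊥ := fun hb => hi (C.sp_zero 0 i (Or.inr (Or.inl hb)))
        have h := hcon i hi0 hi
        rw [show k - i = j by omega] at h
        rw [(sp_eq_zero_iff C i j).1 h n x hx y hy]
        exact zero_mem _
      · exact hin _ _ (C.prdGrade _ _ _ _ hx _ hy) hij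
  rw [J_top C hs] at hle
  have hd := C.internal.submodule_iSupIndep k
  rw [top_le_iff.1 hle] at hd
  exact hk (by simpa using hd)

theorem second (C : RankOneContext L) (hs : C.toGradedLCA.IsSimpleGraded) :
    ∃ j : ℤ, C.G j ≠ ⊥ ∧ C.sp (-j) j ≠ 0 ∧ C.sp 0 j ≠ 0 := by
  obtain ⟨m, h1, h2, h3⟩ := first C hs 0 C.supp_zero
    ((sp_eq_zero_iff C 0 0).2 fun n x hx y hy => C.abelian0 n x hx y hy)
  refine ⟨m, h1, fun h => h3 ?_, h2⟩
  rw [zero_sub, sp_eq_zero_iff]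
  intro n x hx y hy
  exact skew_zero C.toLieConformalAlgebra x y
    (fun n => (sp_eq_zero_iff C _ _).1 h n y hy x hx) n

end P0M

/-- if `L` is simple graded and `k ∈ Supp(L)` has `p_{0,k} = 0`,
then some `m ∈ Supp(L)` has `p_{0,m} ≠ 0` and `p_{m,k-m} ≠ 0`; in particular
`Supp₁(L) ≠ ∅`. -/
theorem exists_nonvanishing_p0m
    {L : Type} [AddCommGroup L] [Module ℂ L] (C : RankOneContext L)
    (hs : C.toGradedLCA.IsSimpleGraded)
    (k : ℤ) (hk : C.G k ≠ ⊥) (h0k : C.sp 0 k = 0) :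
    (∃ m : ℤ, C.G m ≠ ⊥ ∧ C.sp 0 m ≠ 0 ∧ C.sp m (k - m) ≠ 0) ∧
    (∃ j : ℤ, C.G j ≠ ⊥ ∧ C.sp (-j) j ≠ 0 ∧ C.sp 0 j ≠ 0) := by
  exact ⟨P0M.first C hs k hk h0k, P0M.second C hs⟩
end
end

section
/- Let L be a simple graded ℤ-graded Lie conformal algebra as in the structure context (every nonzero component free of rank one over ℂ[∂], 0 ∈ Supp(L), L₀ abelian), and suppose k ∈ Supp₁(L). Then for every j ∈ Supp(L) there exists c_j ∈ ℂ such that p_{0,j}(λ) = c_j · p_{0,k}(λ). -/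
open scoped BigOperators Classical ENNReal
open Polynomial

noncomputable section

section aux
open Polynomial

lemma aux_inf_ne {F : ℂ[X]} (hF : F ≠ 0) : ∃ l : ℂ, l ≠ 0 ∧ F.eval l ≠ 0 := by
  by_contra! h
  apply hF
  have : X * F = 0 := by
    apply Polynomial.funext
    intro l
    by_cases hl : l = 0
    · simp [hl]
    · simp [h l hl]
  simpa using this

lemma aux_coeff_top (l : ℂ) (q : ℂ[X]) (d : ℕ) (h : q.natDegree ≤ d) :
    (q.taylor l).coeff d = q.coeff d := by
  rw [taylor_coeff, eval_eq_sum_range' (n := 1)]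
  · simp [hasseDeriv_coeff]
  · have := natDegree_hasseDeriv_le q d
    omega

lemma aux_coeff_next (l : ℂ) (q : ℂ[X]) (d : ℕ) (h : q.natDegree ≤ d + 1) :
    (q.taylor l).coeff d = q.coeff d + (d + 1) * l * q.coeff (d + 1) := by
  rw [taylor_coeff, eval_eq_sum_range' (n := 2)]
  · simp [hasseDeriv_coeff, Finset.sum_range_succ, add_comm 1 d]
    ring
  · have := natDegree_hasseDeriv_le q d
    omega

lemma aux_taylor_lead {A : ℂ[X]} (hA : A ≠ 0) {l α β : ℂ}
    (h : ∀ m : ℂ, α * A.eval (m + l) = β * A.eval m) : α = β := by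
  have h1 : C α * A.taylor l = C β * A := by
    apply Polynomial.funext
    intro m
    simpa [taylor_eval] using h m
  have h2 := congrArg (fun q => q.coeff A.natDegree) h1
  simp only [coeff_C_mul, aux_coeff_top l A _ le_rfl] at h2
  exact mul_right_cancel₀ (by simpa using hA) h2

/-- if `A(m+l) - A(m)` is constant with `l ≠ 0` then `A` has degree at most one -/
lemma aux_diff_const {A : ℂ[X]} {l c : ℂ} (hl : l ≠ 0)
    (h : ∀ m : ℂ, A.eval (m + l) = A.eval m + c) : A.natDegree ≤ 1 := by
  by_contra! hd
  obtain ⟨e, he⟩ : ∃ e, A.natDegree = e + 1 + 1 := ⟨A.natDegree - 2, by omega⟩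
  have h1 : A.taylor l = A + C c := by
    apply Polynomial.funext
    intro m
    simpa [taylor_eval] using h m
  have h2 := congrArg (fun q => q.coeff (e + 1)) h1
  simp only [aux_coeff_next l A (e + 1) he.le, coeff_add, coeff_C_succ, add_zero] at h2
  have h3 : A.coeff (e + 1 + 1) ≠ 0 := by
    rw [← he]
    have : A ≠ 0 := by rintro rfl; simp at he
    simpa using this
  have h4 : (((e + 1 : ℕ) : ℂ) + 1) ≠ 0 := by exact_mod_cast Nat.succ_ne_zero (e + 1)
  have h5 : (((e + 1 : ℕ) : ℂ) + 1) * l * A.coeff (e + 1 + 1) = 0 := by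
    linear_combination h2
  simp [hl, h3] at h5
  exact h4 (by exact_mod_cast h5)

lemma aux_inv_const {A : ℂ[X]} {l : ℂ} (hl : l ≠ 0)
    (h : ∀ m : ℂ, A.eval (m + l) = A.eval m) : ∃ a : ℂ, A = C a := by
  have h0 := aux_diff_const (c := 0) hl (by simpa using h)
  have h1 := h 0
  rw [eval_eq_sum_range' (n := 2) (by omega), eval_eq_sum_range' (n := 2) (by omega)] at h1
  simp [Finset.sum_range_succ, hl] at h1
  refine ⟨A.coeff 0, eq_C_of_natDegree_le_zero ?_⟩
  rw [natDegree_le_iff_coeff_eq_zero]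
  intro N hN
  rcases Nat.lt_or_ge 1 N with h2 | h2
  · exact coeff_eq_zero_of_natDegree_lt (by omega)
  · obtain rfl : N = 1 := by omega
    exact h1

/-- coefficient of the inner variable -/
def auxCf (p : ℂ[X][X]) (n : ℕ) : ℂ[X] :=
  ∑ k ∈ Finset.range (p.natDegree + 1), monomial k ((p.coeff k).coeff n)

lemma auxCf_eval (p : ℂ[X][X]) (n : ℕ) (m : ℂ) :
    (auxCf p n).eval m = (p.eval (C m)).coeff n := by
  rw [eval_eq_sum_range (p := p), auxCf, eval_finsetSum, finsetSum_coeff]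
  apply Finset.sum_congr rfl
  intro k _
  rw [eval_monomial, ← C_pow, coeff_mul_C]

lemma aux_ext {p q : ℂ[X][X]}
    (h : ∀ x l : ℂ, (p.eval (C l)).eval x = (q.eval (C l)).eval x) : p = q := by
  have h1 : ∀ l : ℂ, p.eval (C l) = q.eval (C l) := fun l => Polynomial.funext fun x => h x l
  refine Polynomial.eq_of_infinite_eval_eq p q ?_
  refine (Set.infinite_range_of_injective (C_injective (R := ℂ))).mono ?_
  rintro _ ⟨l, rfl⟩
  exact h1 l

/-- either `p` is zero or it has an inner degree -/
lemma aux_degree {p : ℂ[X][X]} (hp : p ≠ 0) :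
    ∃ d, auxCf p d ≠ 0 ∧ ∀ n, d < n → auxCf p n = 0 := by
  classical
  have hb : ∀ n, p.support.sup (fun k => (p.coeff k).natDegree) < n → auxCf p n = 0 := by
    intro n hn
    apply Finset.sum_eq_zero
    intro k _
    have : (p.coeff k).coeff n = 0 := by
      by_cases hk : k ∈ p.support
      · apply coeff_eq_zero_of_natDegree_lt
        exact lt_of_le_of_lt (Finset.le_sup (f := fun k => (p.coeff k).natDegree) hk) hn
      · rw [notMem_support_iff.1 hk]; simp
    simp [this]
  have hex : ∃ n, auxCf p n ≠ 0 := by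
    by_contra! h
    apply hp
    apply aux_ext
    intro x l
    have : p.eval (C l) = 0 := by
      ext n
      rw [← auxCf_eval, h]; simp
    simp [this]
  obtain ⟨n0, hn0⟩ := hex
  set S := p.support.sup (fun k => (p.coeff k).natDegree)
  refine ⟨Nat.findGreatest (fun n => auxCf p n ≠ 0) S, ?_, ?_⟩
  · exact Nat.findGreatest_spec (P := fun n => auxCf p n ≠ 0) (m := n0)
      (by by_contra! h; exact hn0 (hb _ h)) hn0
  · intro n hn
    by_cases h : n ≤ S
    · by_contra h2
      exact absurd h2 (Nat.findGreatest_is_greatest hn h)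
    · exact hb n (by omega)

lemma aux_natDegree {p : ℂ[X][X]} {d : ℕ} (h : ∀ n, d < n → auxCf p n = 0) (m : ℂ) :
    (p.eval (C m)).natDegree ≤ d := by
  rw [natDegree_le_iff_coeff_eq_zero]
  intro n hn
  rw [← auxCf_eval, h n hn]; simp

lemma aux_key {F G H : ℂ[X]} (hF : F ≠ 0) (hG : ∀ c : ℂ, G ≠ c • F) {p : ℂ[X][X]} (hp : p ≠ 0)
    (h : ∀ x l m : ℂ, H.eval l * (p.eval (C m)).eval (x + l)
      = F.eval l * (p.eval (C (l + m))).eval x + G.eval l * (p.eval (C m)).eval x) :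
    H = F + G ∧ ∃ a : ℂ, ∀ x m : ℂ, (p.eval (C m)).eval x = a := by
  have hpol : ∀ l m : ℂ, C (H.eval l) * (p.eval (C m)).taylor l
      = C (F.eval l) * p.eval (C (l + m)) + C (G.eval l) * p.eval (C m) := by
    intro l m
    apply Polynomial.funext
    intro x
    simpa [taylor_eval] using h x l m
  obtain ⟨d, hd, hd'⟩ := aux_degree hp
  have htop : ∀ l m : ℂ, F.eval l * (auxCf p d).eval (m + l)
      = (H.eval l - G.eval l) * (auxCf p d).eval m := by
    intro l m
    have := congrArg (fun q => q.coeff d) (hpol l m)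
    simp only [coeff_C_mul, coeff_add, aux_coeff_top l _ d (aux_natDegree hd' m),
      ← auxCf_eval] at this
    rw [add_comm m l]
    linear_combination -this
  have hlead : ∀ l, F.eval l = H.eval l - G.eval l := fun l => aux_taylor_lead hd (htop l)
  have hH : H = F + G := by
    apply Polynomial.funext
    intro l
    rw [eval_add, hlead]; ring
  refine ⟨hH, ?_⟩
  obtain ⟨l0, hl0, hFl0⟩ := aux_inf_ne hF
  obtain ⟨a, ha⟩ := aux_inv_const (A := auxCf p d) hl0 (by
    intro m
    have := htop l0 m
    rw [← hlead] at this
    exact mul_left_cancel₀ hFl0 this)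
  have ha0 : a ≠ 0 := by rintro rfl; simp [ha] at hd
  rcases d with _ | d
  · refine ⟨a, fun x m => ?_⟩
    rw [eq_C_of_natDegree_le_zero (aux_natDegree hd' m), ← auxCf_eval, ha]
    simp
  · exfalso
    have hnext : ∀ l m : ℂ, F.eval l * ((auxCf p d).eval (m + l) - (auxCf p d).eval m)
        = H.eval l * ((d + 1) * l * a) := by
      intro l m
      have := congrArg (fun q => q.coeff d) (hpol l m)
      simp only [coeff_C_mul, coeff_add, aux_coeff_next l _ d (aux_natDegree hd' m),
        ← auxCf_eval, ha, eval_C] at this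
      have h2 := hlead l
      rw [add_comm m l]
      linear_combination -this - (auxCf p d).eval m * h2
    have hdeg : (auxCf p d).natDegree ≤ 1 := by
      apply aux_diff_const (c := (F.eval l0)⁻¹ * (H.eval l0 * ((d + 1) * l0 * a))) hl0
      intro m
      rw [← hnext l0 m]
      field_simp
      ring
    have hd1 : ((d : ℂ) + 1) ≠ 0 := by exact_mod_cast Nat.succ_ne_zero d
    set b := (auxCf p d).coeff 1 with hb
    have hfin : X * (b • F) = X * ((((d : ℂ) + 1) * a) • H) := by
      apply Polynomial.funext
      intro l
      have := hnext l 0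
      rw [eval_eq_sum_range' (p := auxCf p d) (n := 2) (by omega),
        eval_eq_sum_range' (p := auxCf p d) (n := 2) (by omega)] at this
      simp [Finset.sum_range_succ, ← hb] at this
      simp
      linear_combination this
    have hfin2 := mul_left_cancel₀ X_ne_zero hfin
    apply hG ((((d : ℂ) + 1) * a)⁻¹ * b - 1)
    have : H = ((((d : ℂ) + 1) * a)⁻¹ * b) • F := by
      rw [mul_smul, hfin2, smul_smul, inv_mul_cancel₀ (mul_ne_zero hd1 ha0), one_smul]
    rw [sub_smul, ← this, hH]
    simp

lemma aux_indep {p : ℂ[X][X]}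
    (h : ∀ x l m : ℂ, (p.eval (C m)).eval (x + l) * (p.eval (C l)).eval x
      = (p.eval (C l)).eval (x + m) * (p.eval (C m)).eval x) :
    ∃ f : ℂ[X], ∀ x l : ℂ, (p.eval (C l)).eval x = f.eval l := by
  by_cases hp : p = 0
  · exact ⟨0, by simp [hp]⟩
  obtain ⟨d, hd, hd'⟩ := aux_degree hp
  rcases d with _ | d
  · refine ⟨auxCf p 0, fun x l => ?_⟩
    rw [eq_C_of_natDegree_le_zero (aux_natDegree hd' l), auxCf_eval]
    simp
  exfalso
  obtain ⟨l, hl, hne⟩ := aux_inf_ne (F := auxCf p (d + 1) * (auxCf p (d + 1)).comp (-X))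
    (by
      refine mul_ne_zero hd ?_
      intro h0
      apply hd
      have := congrArg (fun q => q.comp (-X)) h0
      simpa [comp_assoc] using this)
  simp at hne
  obtain ⟨h1, h2⟩ := hne
  have hpol : (p.eval (C (-l))).taylor l * p.eval (C l)
      = (p.eval (C l)).taylor (-l) * p.eval (C (-l)) := by
    apply Polynomial.funext
    intro x
    simpa [taylor_eval] using h x l (-l)
  have hq := aux_natDegree hd' l
  have hr := aux_natDegree hd' (-l)
  rw [auxCf_eval] at h1 h2
  generalize p.eval (C l) = q at *
  generalize p.eval (C (-l)) = r at *
  have hdq : q.natDegree = d + 1 := le_antisymm hq (le_natDegree_of_ne_zero h1)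
  have hdr : r.natDegree = d + 1 := le_antisymm hr (le_natDegree_of_ne_zero h2)
  have key : ∀ u v : ℂ[X], u.natDegree = d + 1 → v.natDegree = d + 1 →
      (u * v).coeff (d + (d + 1)) = u.coeff d * v.coeff (d + 1) + u.coeff (d + 1) * v.coeff d := by
    intro u v hu hv
    rw [coeff_mul, ← Finset.sum_subset (s₁ := {(d, d + 1), (d + 1, d)})]
    · rw [Finset.sum_pair (by simp)]
    · intro y hy
      simp only [Finset.mem_insert, Finset.mem_singleton] at hy
      rcases hy with rfl | rfl <;> simp [add_comm]
    · rintro ⟨s, t⟩ hy hy'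
      have hy := Finset.HasAntidiagonal.mem_antidiagonal.1 hy
      dsimp only at hy
      simp only [Finset.mem_insert, Finset.mem_singleton, Prod.mk.injEq] at hy'
      rcases Nat.lt_or_ge (d + 1) s with h5 | h5
      · rw [coeff_eq_zero_of_natDegree_lt (p := u) (by omega)]; simp
      · rw [coeff_eq_zero_of_natDegree_lt (p := v) (by omega)]; simp
  have h3 := congrArg (fun q => q.coeff (d + (d + 1))) hpol
  rw [key _ _ (by simpa using hdr) hdq, key _ _ (by simpa using hdq) hdr,
    aux_coeff_next _ _ _ hq, aux_coeff_next _ _ _ hr, aux_coeff_top _ _ _ hq,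
    aux_coeff_top _ _ _ hr] at h3
  have hd1 : ((d : ℂ) + 1) ≠ 0 := by exact_mod_cast Nat.succ_ne_zero d
  have : 2 * ((d : ℂ) + 1) * l * q.coeff (d + 1) * r.coeff (d + 1) = 0 := by
    linear_combination h3
  simp [hd1, hl, h1, h2] at this
end aux
section aux2
open Polynomial

lemma aux_main (sp : ℤ → ℤ → ℂ[X][X])
    (J : ∀ (i j k : ℤ) (x l m : ℂ),
      ((sp j k).eval (C m)).eval (x + l) * ((sp i (j + k)).eval (C l)).eval x
        - ((sp i k).eval (C l)).eval (x + m) * ((sp j (i + k)).eval (C m)).eval x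
      = ((sp i j).eval (C l)).eval (-l - m) * ((sp (i + j) k).eval (C (l + m))).eval x)
    (h00 : sp 0 0 = 0) (k : ℤ) (hk1 : sp (-k) k ≠ 0) (hk0 : sp 0 k ≠ 0) (j : ℤ) :
    ∃ c : ℂ, sp 0 j = c • sp 0 k := by
  have hf : ∀ j, ∃ f : ℂ[X], ∀ x l : ℂ, ((sp 0 j).eval (C l)).eval x = f.eval l := by
    intro j
    apply aux_indep
    intro x l m
    have := J 0 0 j x l m
    simp only [zero_add, h00, eval_zero, zero_mul] at this
    linear_combination this
  choose f hf using hf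
  have hJ0 : ∀ (i j : ℤ) (x l m : ℂ),
      (f (i + j)).eval l * ((sp i j).eval (C m)).eval (x + l)
      = (f i).eval l * ((sp i j).eval (C (l + m))).eval x
        + (f j).eval l * ((sp i j).eval (C m)).eval x := by
    intro i j x l m
    have := J 0 i j x l m
    simp only [zero_add, hf] at this
    linear_combination this
  have hf0 : f 0 = 0 := by
    apply Polynomial.funext
    intro l
    rw [← hf 0 0 l, h00]; simp
  have hfk : f k ≠ 0 := by
    intro h
    apply hk0
    apply aux_ext
    intro x l
    rw [hf, h]; simp
  -- f (-k) = - f k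
  have hneg : f (-k) = - f k := by
    obtain ⟨x, hx⟩ : ∃ x : ℂ, (sp (-k) k).map (evalRingHom x) ≠ 0 := by
      by_contra! h
      apply hk1
      apply aux_ext
      intro x l
      have h1 := congrArg (fun q => q.eval l) (h x)
      have h2 : ((sp (-k) k).map (evalRingHom x)).eval l
          = ((sp (-k) k).eval (C l)).eval x := by
        have := eval_map_apply (p := sp (-k) k) (evalRingHom x) (C l)
        simpa using this
      rw [← h2, h x]; simp
    have h2 : ∀ l, ((sp (-k) k).map (evalRingHom x)).eval l
          = ((sp (-k) k).eval (C l)).eval x := by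
      intro l
      have := eval_map_apply (p := sp (-k) k) (evalRingHom x) (C l)
      simpa using this
    apply Polynomial.funext
    intro l
    apply aux_taylor_lead hx (l := l)
    intro m
    have := hJ0 (-k) k x l m
    rw [neg_add_cancel, hf0] at this
    simp only [eval_zero, zero_mul] at this
    rw [h2, h2, add_comm m l, eval_neg]
    linear_combination -this
  -- reduce to polynomials f
  suffices hmain : ∃ c : ℂ, f j = c • f k by
    obtain ⟨c, hc⟩ := hmain
    refine ⟨c, aux_ext fun x l => ?_⟩
    rw [hf, hc, eval_smul, eval_smul, eval_smul, hf]
  by_contra! hj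
  have hkey1 : ∀ j, (∀ c : ℂ, f j ≠ c • f k) → sp k j ≠ 0 →
      f (k + j) = f k + f j ∧ ∃ a : ℂ, ∀ x m : ℂ, ((sp k j).eval (C m)).eval x = a :=
    fun j hj hne => aux_key hfk hj hne (hJ0 k j)
  have hkey2 : ∀ j, (∀ c : ℂ, f j ≠ c • f k) → sp (-k) j ≠ 0 →
      f (-k + j) = - f k + f j ∧ ∃ a : ℂ, ∀ x m : ℂ, ((sp (-k) j).eval (C m)).eval x = a :=
    fun j hj hne => aux_key (neg_ne_zero.2 hfk)
      (fun c h => hj (-c) (by simpa using h)) hne (by simpa only [hneg] using hJ0 (-k) j)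
  have hind1 : ∀ j, (∀ c : ℂ, f j ≠ c • f k) → sp k j ≠ 0 → ∀ c : ℂ, f (k + j) ≠ c • f k := by
    intro j hj hne c hc
    apply hj (c - 1)
    rw [sub_smul, ← hc, (hkey1 j hj hne).1]; simp
  have hind2 : ∀ j, (∀ c : ℂ, f j ≠ c • f k) → sp (-k) j ≠ 0 →
      ∀ c : ℂ, f (-k + j) ≠ c • f k := by
    intro j hj hne c hc
    apply hj (c + 1)
    rw [add_smul, ← hc, (hkey2 j hj hne).1]; simp
  have hc1 : ∀ j, (∀ c : ℂ, f j ≠ c • f k) →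
      ∃ a : ℂ, ∀ x m : ℂ, ((sp k j).eval (C m)).eval x = a := by
    intro j hj
    by_cases h : sp k j = 0
    · exact ⟨0, by simp [h]⟩
    · exact (hkey1 j hj h).2
  have hc2 : ∀ j, (∀ c : ℂ, f j ≠ c • f k) →
      ∃ a : ℂ, ∀ x m : ℂ, ((sp (-k) j).eval (C m)).eval x = a := by
    intro j hj
    by_cases h : sp (-k) j = 0
    · exact ⟨0, by simp [h]⟩
    · exact (hkey2 j hj h).2
  have hp1 : ∀ j, (∀ c : ℂ, f j ≠ c • f k) → ∃ a : ℂ, ∀ x l m : ℂ,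
      ((sp k j).eval (C m)).eval (x + l) * ((sp (-k) (k + j)).eval (C l)).eval x = a := by
    intro j hj
    by_cases h : sp k j = 0
    · exact ⟨0, by simp [h]⟩
    · obtain ⟨a, ha⟩ := hc1 j hj
      obtain ⟨b, hb⟩ := hc2 (k + j) (hind1 j hj h)
      exact ⟨a * b, fun x l m => by rw [ha, hb]⟩
  have hp2 : ∀ j, (∀ c : ℂ, f j ≠ c • f k) → ∃ a : ℂ, ∀ x l m : ℂ,
      ((sp (-k) j).eval (C l)).eval (x + m) * ((sp k (-k + j)).eval (C m)).eval x = a := by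
    intro j hj
    by_cases h : sp (-k) j = 0
    · exact ⟨0, by simp [h]⟩
    · obtain ⟨a, ha⟩ := hc2 j hj
      obtain ⟨b, hb⟩ := hc1 (-k + j) (hind2 j hj h)
      exact ⟨a * b, fun x l m => by rw [ha, hb]⟩
  have hA : ∀ j, (∀ c : ℂ, f j ≠ c • f k) →
      (∃ a : ℂ, f j = C a) ∧ (sp k j ≠ 0 ∨ sp (-k) j ≠ 0) := by
    intro j hj
    obtain ⟨a, ha⟩ := hp1 j hj
    obtain ⟨b, hb⟩ := hp2 j hj
    have hJ : ∀ s l : ℂ, ((sp (-k) k).eval (C l)).eval (-s) * (f j).eval s = a - b := by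
      intro s l
      have := J (-k) k j 0 l (s - l)
      rw [ha, hb, neg_add_cancel, hf] at this
      rw [this]
      congr 2 <;> ring
    have hfj : f j ≠ 0 := fun h => hj 0 (by simpa using h)
    have hab : a - b ≠ 0 := by
      intro h0
      apply hk1
      apply aux_ext
      intro x l
      have : (((sp (-k) k).eval (C l)).comp (-X)) * f j = 0 := by
        apply Polynomial.funext
        intro s
        simpa [h0] using hJ s l
      have h1 := (mul_eq_zero.1 this).resolve_right hfj
      have h2 := congrArg (fun q => q.eval (-x)) h1
      simpa using h2
    constructor
    · refine ⟨(f j).coeff 0, ?_⟩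
      apply eq_C_of_degree_le_zero
      by_contra! hdeg
      obtain ⟨s, hs⟩ := Complex.exists_root hdeg
      have := hJ s 0
      rw [hs.eq_zero, mul_zero] at this
      exact hab this.symm
    · by_contra! h
      apply hab
      rw [← ha 0 0 0, ← hb 0 0 0, h.1, h.2]; simp
  obtain ⟨⟨a, ha⟩, hor⟩ := hA j hj
  have hfin : ∃ b : ℂ, f k = C b := by
    rcases hor with h | h
    · obtain ⟨⟨b, hb⟩, -⟩ := hA _ (hind1 j hj h)
      rw [(hkey1 j hj h).1, ha] at hb
      exact ⟨b - a, by rw [C_sub, ← hb]; ring⟩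
    · obtain ⟨⟨b, hb⟩, -⟩ := hA _ (hind2 j hj h)
      rw [(hkey2 j hj h).1, ha] at hb
      exact ⟨a - b, by rw [C_sub, ← hb]; ring⟩
  obtain ⟨b, hb⟩ := hfin
  have hb0 : b ≠ 0 := by rintro rfl; simp [hb] at hfk
  apply hj (a / b)
  rw [ha, hb, smul_C, smul_eq_mul, div_mul_cancel₀ _ hb0]
end aux2
section aux3
open Polynomial

variable {L : Type} [AddCommGroup L] [Module ℂ L]

def auxBr (A : LieConformalAlgebra L) (l : ℂ) (a b : L) : L :=
  ∑ᶠ n : ℕ, (l ^ n / (n.factorial : ℂ)) • A.prd n a b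

lemma auxBr_eq (A : LieConformalAlgebra L) (l : ℂ) (a b : L) (N : ℕ)
    (h : ∀ n, N ≤ n → A.prd n a b = 0) :
    auxBr A l a b = ∑ n ∈ Finset.range N, (l ^ n / (n.factorial : ℂ)) • A.prd n a b := by
  apply finsum_eq_sum_of_support_subset
  intro n hn
  simp only [Finset.coe_range, Set.mem_Iio]
  by_contra! h'
  exact hn (by simp [h n h'])

lemma auxBr_fin (A : LieConformalAlgebra L) (l : ℂ) (a b : L) :
    (Function.support fun n : ℕ => (l ^ n / (n.factorial : ℂ)) • A.prd n a b).Finite := by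
  obtain ⟨N, hN⟩ := A.bound a b
  refine (Set.finite_Iio N).subset ?_
  intro n hn
  simp only [Set.mem_Iio]
  by_contra! h'
  exact hn (by simp [hN n h'])

lemma auxBr_add_right (A : LieConformalAlgebra L) (l : ℂ) (a b c : L) :
    auxBr A l a (b + c) = auxBr A l a b + auxBr A l a c := by
  unfold auxBr
  rw [← finsum_add_distrib (auxBr_fin A l a b) (auxBr_fin A l a c)]
  simp

lemma auxBr_add_left (A : LieConformalAlgebra L) (l : ℂ) (a b c : L) :
    auxBr A l (a + b) c = auxBr A l a c + auxBr A l b c := by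
  unfold auxBr
  rw [← finsum_add_distrib (auxBr_fin A l a c) (auxBr_fin A l b c)]
  simp

lemma auxBr_smul_right (A : LieConformalAlgebra L) (l r : ℂ) (a b : L) :
    auxBr A l a (r • b) = r • auxBr A l a b := by
  unfold auxBr
  rw [smul_finsum]
  simp [smul_comm r]

lemma auxBr_smul_left (A : LieConformalAlgebra L) (l r : ℂ) (a b : L) :
    auxBr A l (r • a) b = r • auxBr A l a b := by
  unfold auxBr
  rw [smul_finsum]
  simp [smul_comm r]

lemma aux_fact (l : ℂ) (n : ℕ) :
    l ^ (n + 1) / ((n + 1).factorial : ℂ) * ((n : ℂ) + 1) = l * (l ^ n / (n.factorial : ℂ)) := by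
  have h1 : ((n : ℂ) + 1) ≠ 0 := by exact_mod_cast Nat.succ_ne_zero n
  have h2 : (n.factorial : ℂ) ≠ 0 := by exact_mod_cast Nat.factorial_ne_zero n
  rw [Nat.factorial_succ]
  push_cast
  field_simp
  ring

lemma auxBr_D_left (A : LieConformalAlgebra L) (l : ℂ) (a b : L) :
    auxBr A l (A.D a) b = (-l) • auxBr A l a b := by
  obtain ⟨N, hN⟩ := A.bound a b
  obtain ⟨M, hM⟩ := A.bound (A.D a) b
  rw [auxBr_eq A l a b (N + M) (fun n hn => hN n (by omega)),
    auxBr_eq A l (A.D a) b (N + M + 1) (fun n hn => hM n (by omega)),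
    Finset.sum_range_succ', Finset.smul_sum]
  simp only [A.sesq, Nat.cast_zero, neg_zero, zero_smul, smul_zero, add_zero, Nat.add_sub_cancel,
    smul_smul]
  apply Finset.sum_congr rfl
  intro n _
  congr 1
  have := aux_fact l n
  push_cast
  linear_combination -this

lemma auxBr_D_right (A : LieConformalAlgebra L) (l : ℂ) (a b : L) :
    auxBr A l a (A.D b) = A.D (auxBr A l a b) + l • auxBr A l a b := by
  obtain ⟨N, hN⟩ := A.bound a b
  obtain ⟨M, hM⟩ := A.bound a (A.D b)
  rw [auxBr_eq A l a (A.D b) (N + M + 1) (fun n hn => hM n (by omega))]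
  simp only [A.sesq', smul_add, Finset.sum_add_distrib]
  congr 1
  · rw [auxBr_eq A l a b (N + M + 1) (fun n hn => hN n (by omega))]
    simp
  · rw [Finset.sum_range_succ', auxBr_eq A l a b (N + M) (fun n hn => hN n (by omega)),
      Finset.smul_sum]
    simp only [Nat.cast_zero, zero_smul, smul_zero, add_zero, Nat.add_sub_cancel, smul_smul]
    apply Finset.sum_congr rfl
    intro n _
    congr 1
    have := aux_fact l n
    push_cast
    linear_combination this

lemma auxBr_aeval_left (A : LieConformalAlgebra L) (l : ℂ) (a b : L) (q : ℂ[X]) :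
    auxBr A l (aeval A.D q a) b = q.eval (-l) • auxBr A l a b := by
  induction q using Polynomial.induction_on with
  | C r => simp [auxBr_smul_left, Module.algebraMap_end_apply]
  | add p q hp hq => simp [auxBr_add_left, hp, hq, add_smul]
  | monomial n r h =>
    have : aeval A.D (C r * X ^ (n + 1)) a = A.D (aeval A.D (C r * X ^ n) a) := by
      rw [pow_succ', mul_left_comm, map_mul, aeval_X]; rfl
    rw [this, auxBr_D_left, h, smul_smul]
    congr 1
    simp [pow_succ]
    ring

lemma auxBr_aeval_right (A : LieConformalAlgebra L) (l : ℂ) (a b : L) (q : ℂ[X]) :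
    auxBr A l a (aeval A.D q b) = aeval A.D (q.taylor l) (auxBr A l a b) := by
  induction q using Polynomial.induction_on with
  | C r => simp [auxBr_smul_right, Module.algebraMap_end_apply]
  | add p q hp hq => simp [auxBr_add_right, hp, hq]
  | monomial n r h =>
    have : aeval A.D (C r * X ^ (n + 1)) b = A.D (aeval A.D (C r * X ^ n) b) := by
      rw [pow_succ', mul_left_comm, map_mul, aeval_X]; rfl
    rw [this, auxBr_D_right, h]
    have h2 : (taylor l) (C r * X ^ (n + 1)) = (X + C l) * (taylor l) (C r * X ^ n) := by
      rw [pow_succ', mul_left_comm, taylor_mul, taylor_X]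
    rw [h2, map_mul (aeval A.D), map_add (aeval A.D), aeval_X, aeval_C]
    simp [Module.algebraMap_end_apply, smul_comm l r]

lemma aux_sum_tail (f : ℕ → L) (K M M' : ℕ) (h : ∀ n, K ≤ n → f n = 0) (hM : K ≤ M)
    (hM' : M ≤ M') : ∑ n ∈ Finset.range M, f n = ∑ n ∈ Finset.range M', f n := by
  apply Finset.sum_subset (Finset.range_mono hM')
  intro n _ hn
  apply h
  simp at hn
  omega

lemma aux_flip (G : ℕ → ℕ → L) (K : ℕ) (h1 : ∀ j s, K ≤ j → G j s = 0)
    (h2 : ∀ j s, K ≤ s → G j s = 0) :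
    ∑ m ∈ Finset.range (2 * K), ∑ j ∈ Finset.range (m + 1), G j (m - j)
      = ∑ j ∈ Finset.range (2 * K), ∑ s ∈ Finset.range (2 * K), G j s := by
  rw [Finset.sum_range_diag_flip]
  apply Finset.sum_congr rfl
  intro j _
  by_cases hj : K ≤ j
  · rw [Finset.sum_eq_zero, Finset.sum_eq_zero] <;> intros <;> exact h1 _ _ hj
  · exact aux_sum_tail _ K _ _ (h2 j) (by omega) (by omega)

lemma aux_bound_right (A : LieConformalAlgebra L) (a : L) (f : ℕ → L) (N : ℕ)
    (h : ∀ n, N ≤ n → f n = 0) : ∃ M, ∀ m, M ≤ m → ∀ n, A.prd m a (f n) = 0 := by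
  choose B hB using fun n => A.bound a (f n)
  refine ⟨(Finset.range N).sup B, fun m hm n => ?_⟩
  by_cases hn : N ≤ n
  · simp [h n hn]
  · exact hB n m (le_trans (Finset.le_sup (f := B) (by simpa using hn)) hm)

lemma aux_bound_left (A : LieConformalAlgebra L) (c : L) (f : ℕ → L) (N : ℕ)
    (h : ∀ n, N ≤ n → f n = 0) : ∃ M, ∀ m, M ≤ m → ∀ n, A.prd m (f n) c = 0 := by
  choose B hB using fun n => A.bound (f n) c
  refine ⟨(Finset.range N).sup B, fun m hm n => ?_⟩
  by_cases hn : N ≤ n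
  · simp [h n hn]
  · exact hB n m (le_trans (Finset.le_sup (f := B) (by simpa using hn)) hm)

lemma auxBr_nested (A : LieConformalAlgebra L) (l μ : ℂ) (a b c : L) (K : ℕ)
    (h1 : ∀ n, K ≤ n → A.prd n b c = 0) (h2 : ∀ m, K ≤ m → ∀ n, A.prd m a (A.prd n b c) = 0) :
    auxBr A l a (auxBr A μ b c) = ∑ m ∈ Finset.range K, ∑ n ∈ Finset.range K,
      (l ^ m / (m.factorial : ℂ) * (μ ^ n / (n.factorial : ℂ))) • A.prd m a (A.prd n b c) := by
  rw [auxBr_eq A μ b c K h1, auxBr_eq A l a _ K]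
  · simp only [map_sum, map_smul, Finset.smul_sum, smul_smul]
  · intro n hn
    simp [h2 n hn]

lemma auxBr_jacobi (A : LieConformalAlgebra L) (l μ : ℂ) (a b c : L) :
    auxBr A l a (auxBr A μ b c) - auxBr A μ b (auxBr A l a c)
      = auxBr A (l + μ) (auxBr A l a b) c := by
  obtain ⟨N1, hN1⟩ := A.bound b c
  obtain ⟨N2, hN2⟩ := A.bound a c
  obtain ⟨N3, hN3⟩ := A.bound a b
  obtain ⟨M1, hM1⟩ := aux_bound_right A a (fun n => A.prd n b c) N1 hN1
  obtain ⟨M2, hM2⟩ := aux_bound_right A b (fun n => A.prd n a c) N2 hN2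
  obtain ⟨M3, hM3⟩ := aux_bound_left A c (fun n => A.prd n a b) N3 hN3
  set K := N1 + N2 + N3 + M1 + M2 + M3 with hK
  let G : ℕ → ℕ → ℕ → L := fun n j s =>
    (l ^ j / (j.factorial : ℂ) * (l ^ s / (s.factorial : ℂ)) * (μ ^ n / (n.factorial : ℂ)))
      • A.prd (s + n) (A.prd j a b) c
  have G1 : ∀ n j s, K ≤ n → G n j s = 0 := fun n j s h => by
    simp only [G, hM3 (s + n) (by omega) j, smul_zero]
  have G2 : ∀ n j s, K ≤ s → G n j s = 0 := fun n j s h => by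
    simp only [G, hM3 (s + n) (by omega) j, smul_zero]
  have G3 : ∀ n j s, K ≤ j → G n j s = 0 := fun n j s h => by
    simp [G, hN3 j (by omega)]
  rw [auxBr_nested A l μ a b c (2 * K) (fun n hn => hN1 n (by omega))
      (fun n hn => hM1 n (by omega)),
    auxBr_nested A μ l b a c (2 * K) (fun n hn => hN2 n (by omega))
      (fun n hn => hM2 n (by omega)),
    Finset.sum_comm, Finset.sum_comm (s := Finset.range (2 * K)) (t := Finset.range (2 * K))
      (f := fun m n => (μ ^ m / (m.factorial : ℂ) * (l ^ n / (n.factorial : ℂ)))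
        • A.prd m b (A.prd n a c)),
    Finset.sum_comm, ← Finset.sum_sub_distrib]
  have hL : ∀ m n : ℕ, (l ^ m / (m.factorial : ℂ) * (μ ^ n / (n.factorial : ℂ)))
        • A.prd m a (A.prd n b c)
      - (μ ^ n / (n.factorial : ℂ) * (l ^ m / (m.factorial : ℂ))) • A.prd n b (A.prd m a c)
      = ∑ j ∈ Finset.range (m + 1), G n j (m - j) := by
    intro m n
    rw [mul_comm (μ ^ n / _), ← smul_sub, A.jacobi, Finset.smul_sum]
    apply Finset.sum_congr rfl
    intro j hj
    have hj' : j ≤ m := by simpa [Nat.lt_succ_iff] using hj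
    simp only [G, smul_smul]
    rw [show m + n - j = m - j + n by omega]
    congr 1
    rw [Nat.cast_choose ℂ hj', ← mul_div_assoc]
    have e1 : (m.factorial : ℂ) ≠ 0 := by exact_mod_cast Nat.factorial_ne_zero m
    have e2 : (n.factorial : ℂ) ≠ 0 := by exact_mod_cast Nat.factorial_ne_zero n
    have e3 : (j.factorial : ℂ) ≠ 0 := by exact_mod_cast Nat.factorial_ne_zero j
    have e4 : ((m - j).factorial : ℂ) ≠ 0 := by exact_mod_cast Nat.factorial_ne_zero (m - j)
    have e5 : l ^ m = l ^ j * l ^ (m - j) := by rw [← pow_add]; congr 1; omega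
    rw [e5]
    field_simp
  have hLHS : ∀ m, (∑ n ∈ Finset.range (2 * K), (l ^ m / (m.factorial : ℂ)
          * (μ ^ n / (n.factorial : ℂ))) • A.prd m a (A.prd n b c))
      - (∑ n ∈ Finset.range (2 * K), (μ ^ n / (n.factorial : ℂ) * (l ^ m / (m.factorial : ℂ)))
          • A.prd n b (A.prd m a c))
      = ∑ n ∈ Finset.range (2 * K), ∑ j ∈ Finset.range (m + 1), G n j (m - j) := by
    intro m
    rw [← Finset.sum_sub_distrib]
    exact Finset.sum_congr rfl fun n _ => hL m n
  rw [Finset.sum_congr rfl fun m _ => hLHS m, Finset.sum_comm]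
  rw [Finset.sum_congr rfl fun n _ => aux_flip (G n) K (G3 n) (G2 n)]
  rw [auxBr_eq A l a b (2 * K) (fun n hn => hN3 n (by omega)), auxBr_eq A (l + μ) _ c (2 * K)]
  swap
  · intro n hn
    simp only [map_sum, map_smul, LinearMap.sum_apply, LinearMap.smul_apply]
    apply Finset.sum_eq_zero
    intro j _
    rw [hM3 n (by omega) j, smul_zero]
  have hR : ∀ r j : ℕ, ((l + μ) ^ r / (r.factorial : ℂ)) • (l ^ j / (j.factorial : ℂ))
        • A.prd r (A.prd j a b) c = ∑ s ∈ Finset.range (r + 1), G (r - s) j s := by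
    intro r j
    rw [add_pow, Finset.sum_div, Finset.sum_smul]
    apply Finset.sum_congr rfl
    intro s hs
    have hs' : s ≤ r := by simpa [Nat.lt_succ_iff] using hs
    simp only [G, smul_smul]
    rw [show s + (r - s) = r by omega]
    congr 1
    rw [Nat.cast_choose ℂ hs']
    have e1 : (r.factorial : ℂ) ≠ 0 := by exact_mod_cast Nat.factorial_ne_zero r
    have e2 : (s.factorial : ℂ) ≠ 0 := by exact_mod_cast Nat.factorial_ne_zero s
    have e3 : (j.factorial : ℂ) ≠ 0 := by exact_mod_cast Nat.factorial_ne_zero j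
    have e4 : ((r - s).factorial : ℂ) ≠ 0 := by exact_mod_cast Nat.factorial_ne_zero (r - s)
    field_simp
  simp only [map_sum, map_smul, LinearMap.sum_apply, LinearMap.smul_apply, Finset.smul_sum, hR]
  rw [Finset.sum_comm (t := Finset.range (2 * K)) (f := fun r j =>
    ∑ s ∈ Finset.range (r + 1), G (r - s) j s)]
  rw [Finset.sum_congr rfl fun j _ => aux_flip (fun s n => G n j s) K
    (fun s n h => G2 n j s h) (fun s n h => G1 n j s h)]
  rw [Finset.sum_comm]
  apply Finset.sum_congr rfl
  intro j _
  rw [Finset.sum_comm]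

lemma aux_sum_eq_aeval (A : LieConformalAlgebra L) (q : ℂ[X]) (x : L) :
    (q.sum fun k c => c • (⇑A.D)^[k] x) = aeval A.D q x := by
  rw [aeval_eq_sum_range, Polynomial.sum_over_range]
  · simp [Module.End.pow_apply]
  · simp

lemma aux_bas (A : RankOneContext L) (l : ℂ) (i j : ℤ) :
    auxBr A.toLieConformalAlgebra l (A.bas i) (A.bas j)
      = aeval A.D ((A.sp i j).eval (C l)) (A.bas (i + j)) := by
  rw [auxBr_eq _ l _ _ ((A.sp i j).natDegree + 1)]
  · rw [eval_eq_sum_range, map_sum, LinearMap.sum_apply]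
    apply Finset.sum_congr rfl
    intro n _
    have e2 : (n.factorial : ℂ) ≠ 0 := by exact_mod_cast Nat.factorial_ne_zero n
    rw [A.sp_brkt, smul_smul, div_mul_cancel₀ _ e2, aux_sum_eq_aeval, ← C_pow, mul_comm, map_mul,
      aeval_C, Module.End.mul_apply, Module.algebraMap_end_apply]
  · intro n hn
    rw [A.sp_brkt, coeff_eq_zero_of_natDegree_lt (by omega)]
    simp

lemma aux_inj (A : RankOneContext L) (i : ℤ) (hi : A.G i ≠ ⊥) {p q : ℂ[X]}
    (h : aeval A.D p (A.bas i) = aeval A.D q (A.bas i)) : p = q := by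
  have h0 : aeval A.D (p - q) (A.bas i) = 0 := by simp [h]
  rw [← sub_eq_zero]
  generalize p - q = r at *
  rw [aeval_eq_sum_range, LinearMap.sum_apply] at h0
  have := linearIndependent_iff'.1 (A.bas_indep i hi) (Finset.range (r.natDegree + 1)) r.coeff
    (by simpa [Module.End.pow_apply] using h0)
  ext n
  by_cases hn : n ∈ Finset.range (r.natDegree + 1)
  · simpa using this n hn
  · rw [coeff_eq_zero_of_natDegree_lt (by simpa using hn)]; simp

lemma aux_J (A : RankOneContext L) (i j k : ℤ) (x l m : ℂ) :
      ((A.sp j k).eval (C m)).eval (x + l) * ((A.sp i (j + k)).eval (C l)).eval x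
        - ((A.sp i k).eval (C l)).eval (x + m) * ((A.sp j (i + k)).eval (C m)).eval x
      = ((A.sp i j).eval (C l)).eval (-l - m) * ((A.sp (i + j) k).eval (C (l + m))).eval x := by
  by_cases hG : A.G (i + j + k) = ⊥
  · rw [A.sp_zero i (j + k) (by rw [← add_assoc]; simp [hG]),
      A.sp_zero j (i + k) (by rw [add_left_comm, ← add_assoc]; simp [hG]),
      A.sp_zero (i + j) k (by simp [hG])]
    simp
  have h := auxBr_jacobi A.toLieConformalAlgebra l m (A.bas i) (A.bas j) (A.bas k)
  simp only [aux_bas, auxBr_aeval_left, auxBr_aeval_right] at h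
  rw [show i + (j + k) = i + j + k by ring, show j + (i + k) = i + j + k by ring,
    ← Module.End.mul_apply, ← Module.End.mul_apply, ← map_mul, ← map_mul, ← LinearMap.sub_apply,
    ← map_sub, ← LinearMap.smul_apply, ← map_smul] at h
  have h2 := congrArg (fun q => q.eval x) (aux_inj A _ hG h)
  simp only [eval_sub, eval_mul, taylor_eval, eval_smul, smul_eq_mul] at h2
  rw [h2, neg_add']
end aux3

/-- if `L` is simple graded and `k ∈ Supp₁(L)`, then every
`p_{0,j}` is a constant multiple of `p_{0,k}`. -/
theorem p0j_proportional_to_p0k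
    {L : Type} [AddCommGroup L] [Module ℂ L] (C : RankOneContext L)
    (hs : C.toGradedLCA.IsSimpleGraded)
    (k : ℤ) (hk : C.G k ≠ ⊥) (hk1 : C.sp (-k) k ≠ 0) (hk0 : C.sp 0 k ≠ 0) :
    ∀ j : ℤ, C.G j ≠ ⊥ → ∃ c : ℂ, C.sp 0 j = c • C.sp 0 k := by
  have h00 : C.sp 0 0 = 0 := by
    apply aux_ext
    intro x l
    have h1 : auxBr C.toLieConformalAlgebra l (C.bas 0) (C.bas 0) = 0 := by
      rw [auxBr_eq _ _ _ _ 0 (fun n _ => C.abelian0 n _ (C.bas_mem 0) _ (C.bas_mem 0))]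
      simp
    rw [aux_bas, add_zero] at h1
    have h2 := aux_inj C 0 C.supp_zero (q := 0) (by simpa using h1)
    simp [h2]
  intro j _
  exact aux_main C.sp (aux_J C) h00 k hk1 hk0 j
end
end

section
/- Let L be a ℤ-graded Lie conformal algebra as in the structure context (every nonzero component free of rank one over ℂ[∂], 0 ∈ Supp(L), L₀ abelian), and suppose k ∈ Supp₁(L). Then: (1) −k ∈ Supp₁(L); (2) p_{−k,k}(∂,λ) ∈ ℂ[∂], i.e. p_{−k,k} does not involve λ; (3) deg p_{−k,k}(∂) + deg p_{0,k}(λ) ≤ 2. -/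
open scoped BigOperators Classical ENNReal
open Polynomial

noncomputable section

theorem aux_roots_shift (A : ℂ[X]) (t : ℂ) :
    (A.comp (X + C t)).roots = A.roots.map (fun x => x - t) := by
  have := roots_comp_C_mul_X_add_C A 1 t isUnit_one
  simpa using this

theorem aux_shift (A B : ℂ[X]) (hA : A ≠ 0) (hB : B ≠ 0) (l m : ℂ)
    (h : A.comp (X + C l) * B = B.comp (X + C m) * A) :
    (A.natDegree : ℂ) * l = B.natDegree * m := by
  have h1 := congrArg (fun p : ℂ[X] => p.roots.sum) h
  have hA' : A.comp (X + C l) ≠ 0 := comp_X_add_C_ne_zero_iff.2 hA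
  have hB' : B.comp (X + C m) ≠ 0 := comp_X_add_C_ne_zero_iff.2 hB
  simp only [roots_mul (mul_ne_zero hA' hB), roots_mul (mul_ne_zero hB' hA), aux_roots_shift,
    Multiset.sum_add, Multiset.sum_map_sub, Multiset.map_const', Multiset.sum_replicate,
    Multiset.map_id'] at h1
  rw [IsAlgClosed.card_roots_eq_natDegree, IsAlgClosed.card_roots_eq_natDegree] at h1
  simp only [nsmul_eq_mul] at h1
  linear_combination -h1

theorem aux_exists_ne (f : ℂ[X][X]) (hf : f ≠ 0) (w : ℂ) (hw : w ≠ 0) :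
    ∃ t : ℕ, f.eval (C (((t:ℂ)+1) * w)) ≠ 0 := by
  by_contra! hc
  apply hf
  apply eq_zero_of_infinite_isRoot
  apply Set.infinite_of_injective_forall_mem (f := fun t : ℕ => (C (((t:ℂ)+1) * w) : ℂ[X]))
  · intro a b hab
    have := C_injective hab
    simpa [hw] using this
  · exact hc

theorem aux_ext_s11 (f g : ℂ[X][X]) (S : Set ℂ) (hS : S.Infinite)
    (h : ∀ l ∈ S, f.eval (C l) = g.eval (C l)) : f = g := by
  apply eq_of_infinite_eval_eq
  apply (hS.image (C_injective.injOn)).mono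
  rintro _ ⟨l, hl, rfl⟩
  exact h l hl

theorem aux_const (f : ℂ[X][X])
    (h : ∀ l m : ℂ, (f.eval (C m)).comp (X + C l) * f.eval (C l)
      = (f.eval (C l)).comp (X + C m) * f.eval (C m)) (m : ℂ) :
    (f.eval (C m)).natDegree = 0 := by
  by_cases hm : f.eval (C m) = 0
  · simp [hm]
  have hf : f ≠ 0 := by rintro rfl; simp at hm
  by_cases h0 : m = 0
  · obtain ⟨t, ht⟩ := aux_exists_ne f hf 1 one_ne_zero
    have := aux_shift _ _ hm ht _ _ (h _ _)
    subst h0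
    have h2 : (t:ℂ) + 1 ≠ 0 := by exact_mod_cast Nat.succ_ne_zero t
    simpa [h2] using this
  · obtain ⟨t, ht⟩ := aux_exists_ne f hf (-m) (neg_ne_zero.2 h0)
    have := aux_shift _ _ hm ht _ _ (h _ _)
    generalize (eval (C m) f).natDegree = a at *
    generalize (eval (C ((t+1) * -m)) f).natDegree = b at *
    have h3 : ((a * (t+1) + b : ℕ) : ℂ) = 0 := by
      apply mul_right_cancel₀ h0
      push_cast
      linear_combination -this
    have h4 : a * (t+1) + b = 0 := by exact_mod_cast h3
    have h5 : a * (t+1) = 0 := by omega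
    simpa using h5

theorem aux_const' (f : ℂ[X][X])
    (h : ∀ l m : ℂ, (f.eval (C m)).comp (X + C l) * f.eval (C l)
      = (f.eval (C l)).comp (X + C m) * f.eval (C m)) :
    ∃ φ : ℂ[X], f = φ.map C := by
  refine ⟨f.map (evalRingHom 0), aux_ext_s11 _ _ Set.univ Set.infinite_univ fun l _ => ?_⟩
  rw [eq_C_of_natDegree_eq_zero (aux_const f h l), eval_map, eval₂_at_apply, eval_map]
  congr 1
  rw [coeff_zero_eq_eval_zero, ← coe_evalRingHom]
  have := eval₂_at_apply (p := f) (evalRingHom (0:ℂ)) (C l)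
  simpa using this.symm

theorem aux_final (h : ℂ[X]) (Q R : ℂ → ℂ)
    (H : ∀ l m : ℂ, h.eval (l + m) - h.eval (l - m) = Q m * R l) : h.natDegree ≤ 2 := by
  by_contra! hn
  have key : ∀ l : ℂ, ∀ n : ℕ, (taylor l h - (taylor l h).comp (-X)).coeff n
      = (1 - (-1)^n) * (hasseDeriv n h).eval l := by
    intro l n
    have : (-X : ℂ[X]) = C (-1) * X := by simp
    rw [this, coeff_sub, comp_C_mul_X_coeff, taylor_coeff]; ring
  have ev : ∀ l m : ℂ, (taylor l h - (taylor l h).comp (-X)).eval m = Q m * R l := by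
    intro l m
    rw [← H]
    simp [taylor_eval, eval_comp]
    ring_nf
  have hd1 := natDegree_hasseDeriv h 1
  have hd3 := natDegree_hasseDeriv h 3
  have hne1 : hasseDeriv 1 h ≠ 0 := by intro h0; rw [h0] at hd1; simp at hd1; omega
  have hne3 : hasseDeriv 3 h ≠ 0 := by
    intro h0
    have h1 := hasseDeriv_coeff 3 h (h.natDegree - 3)
    rw [h0, Nat.sub_add_cancel (by omega), coeff_zero, coeff_natDegree] at h1
    have h2 : (h.natDegree.choose 3 : ℂ) ≠ 0 := by
      exact_mod_cast (Nat.choose_pos (by omega)).ne'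
    have h3 : h.leadingCoeff ≠ 0 := by
      rw [Ne, leadingCoeff_eq_zero]; rintro rfl; simp at hn
    exact mul_ne_zero h2 h3 h1.symm
  by_cases hR : ∃ l0, R l0 ≠ 0
  · obtain ⟨l0, hl0⟩ := hR
    set T : ℂ[X] := C (R l0)⁻¹ * (taylor l0 h - (taylor l0 h).comp (-X)) with hT
    have hl : ∀ l, taylor l h - (taylor l h).comp (-X) = C (R l) * T := by
      intro l
      apply Polynomial.funext
      intro m
      rw [ev, hT, eval_mul, eval_mul, ev]
      simp
      field_simp
    have hc : ∀ l n, (1 - (-1)^n) * (hasseDeriv n h).eval l = R l * T.coeff n := by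
      intro l n; rw [← key, hl, coeff_C_mul]
    have e : C (T.coeff 1) * hasseDeriv 3 h = C (T.coeff 3) * hasseDeriv 1 h := by
      apply Polynomial.funext
      intro l
      have a := hc l 1
      have b := hc l 3
      norm_num at a b
      simp
      linear_combination (T.coeff 1) * b / 2 - (T.coeff 3) * a / 2
    have t1 : T.coeff 1 ≠ 0 := by
      intro t1
      apply hne1
      apply Polynomial.funext
      intro l
      have a := hc l 1
      rw [t1] at a
      norm_num at a
      simpa using a
    have t3 : T.coeff 3 ≠ 0 := by
      intro t3
      rw [t3] at e
      simp [t1, hne3] at e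
    have := congrArg natDegree e
    rw [natDegree_C_mul t1, natDegree_C_mul t3] at this
    omega
  · push Not at hR
    apply hne1
    apply Polynomial.funext
    intro l
    have a := key l 1
    have : taylor l h - (taylor l h).comp (-X) = 0 := by
      apply Polynomial.funext
      intro m; rw [ev, hR]; simp
    rw [this] at a
    norm_num at a
    simpa using a
namespace LieConformalAlgebra

theorem aux_flip {A : Type} [AddCommMonoid A] (M : ℕ) (F : ℕ → ℕ → A)
    (hF : ∀ j i, M ≤ j + i → F j i = 0) :
    ∑ m ∈ Finset.range M, ∑ j ∈ Finset.range (m + 1), F j (m - j)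
      = ∑ j ∈ Finset.range M, ∑ i ∈ Finset.range M, F j i := by
  rw [Finset.sum_range_diag_flip]
  refine Finset.sum_congr rfl fun j _ => ?_
  apply Finset.sum_subset
  · intro x; simp only [Finset.mem_range]; omega
  · intro i _ hi
    apply hF
    simp only [Finset.mem_range] at hi; omega

variable {L : Type} [AddCommGroup L] [Module ℂ L] (C : LieConformalAlgebra L)

/-- the bracket evaluated at a complex number -/
def br (a b : L) (l : ℂ) : L := ∑ᶠ n : ℕ, (l ^ n * ((Nat.factorial n : ℂ))⁻¹) • C.prd n a b

theorem br_eq (a b : L) (l : ℂ) (M : ℕ) (h : ∀ n, M ≤ n → C.prd n a b = 0) :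
    C.br a b l = ∑ n ∈ Finset.range M, (l ^ n * ((Nat.factorial n : ℂ))⁻¹) • C.prd n a b := by
  apply finsum_eq_sum_of_support_subset
  intro n hn
  by_contra hc
  apply hn
  simp only [Finset.coe_range, Set.mem_Iio, not_lt] at hc
  simp [h n hc]

theorem br_zero (a b : L) (l : ℂ) (h : ∀ n, C.prd n a b = 0) : C.br a b l = 0 := by
  rw [C.br_eq a b l 0 (fun n _ => h n)]; simp

theorem br_add_left (a a' b : L) (l : ℂ) : C.br (a + a') b l = C.br a b l + C.br a' b l := by
  obtain ⟨N, hN⟩ := C.bound a b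
  obtain ⟨N', hN'⟩ := C.bound a' b
  rw [C.br_eq a b l (N + N') fun n hn => hN n (by omega),
    C.br_eq a' b l (N + N') fun n hn => hN' n (by omega),
    C.br_eq (a + a') b l (N + N') fun n hn => by
      rw [map_add, LinearMap.add_apply, hN n (by omega), hN' n (by omega), add_zero],
    ← Finset.sum_add_distrib]
  simp

theorem br_add_right (a b b' : L) (l : ℂ) : C.br a (b + b') l = C.br a b l + C.br a b' l := by
  obtain ⟨N, hN⟩ := C.bound a b
  obtain ⟨N', hN'⟩ := C.bound a b'
  rw [C.br_eq a b l (N + N') fun n hn => hN n (by omega),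
    C.br_eq a b' l (N + N') fun n hn => hN' n (by omega),
    C.br_eq a (b + b') l (N + N') fun n hn => by
      rw [map_add, hN n (by omega), hN' n (by omega), add_zero],
    ← Finset.sum_add_distrib]
  simp

theorem br_smul_left (c : ℂ) (a b : L) (l : ℂ) : C.br (c • a) b l = c • C.br a b l := by
  obtain ⟨N, hN⟩ := C.bound a b
  rw [C.br_eq a b l N hN, C.br_eq (c • a) b l N fun n hn => by
      rw [map_smul, LinearMap.smul_apply, hN n hn, smul_zero], Finset.smul_sum]
  simp only [map_smul, LinearMap.smul_apply]
  exact Finset.sum_congr rfl fun _ _ => smul_comm _ _ _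

theorem br_smul_right (c : ℂ) (a b : L) (l : ℂ) : C.br a (c • b) l = c • C.br a b l := by
  obtain ⟨N, hN⟩ := C.bound a b
  rw [C.br_eq a b l N hN, C.br_eq a (c • b) l N fun n hn => by
      rw [map_smul, hN n hn, smul_zero], Finset.smul_sum]
  simp only [map_smul]
  exact Finset.sum_congr rfl fun _ _ => smul_comm _ _ _

theorem aux_coef (l : ℂ) (n : ℕ) :
    l ^ (n + 1) * ((Nat.factorial (n + 1) : ℂ))⁻¹ * ((n + 1 : ℕ) : ℂ)
      = l * (l ^ n * ((Nat.factorial n : ℂ))⁻¹) := by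
  have h : ((n + 1 : ℕ) : ℂ) ≠ 0 := by exact_mod_cast Nat.succ_ne_zero n
  have h' : ((Nat.factorial n : ℕ) : ℂ) ≠ 0 := by exact_mod_cast Nat.factorial_ne_zero n
  rw [Nat.factorial_succ, Nat.cast_mul]
  field_simp
  ring

theorem br_D_left (a b : L) (l : ℂ) : C.br (C.D a) b l = (-l) • C.br a b l := by
  obtain ⟨N, hN⟩ := C.bound a b
  rw [C.br_eq a b l N hN, C.br_eq (C.D a) b l (N + 1) fun n hn => by
      rw [C.sesq, hN (n - 1) (by omega), smul_zero], Finset.smul_sum, Finset.sum_range_succ',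
      C.sesq]
  simp only [Nat.cast_zero, neg_zero, zero_smul, smul_zero, add_zero]
  refine Finset.sum_congr rfl fun n _ => ?_
  rw [C.sesq, Nat.add_sub_cancel, smul_smul, smul_smul]
  congr 1
  have := aux_coef l n
  linear_combination -this

theorem br_D_right (a b : L) (l : ℂ) :
    C.br a (C.D b) l = C.D (C.br a b l) + l • C.br a b l := by
  obtain ⟨N, hN⟩ := C.bound a b
  rw [C.br_eq a b l (N + 1) fun n hn => hN n (by omega),
    C.br_eq a (C.D b) l (N + 1) fun n hn => by
      rw [C.sesq', hN (n - 1) (by omega), hN n (by omega), smul_zero, map_zero, add_zero]]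
  simp only [C.sesq', smul_add, Finset.sum_add_distrib, map_sum, map_smul]
  congr 1
  rw [Finset.sum_range_succ', Finset.sum_range_succ, hN N le_rfl, smul_zero, add_zero, Finset.smul_sum]
  simp only [Nat.cast_zero, zero_smul, smul_zero, add_zero]
  refine Finset.sum_congr rfl fun n _ => ?_
  rw [Nat.add_sub_cancel, smul_smul, smul_smul, aux_coef]

theorem br_poly_left (q : ℂ[X]) (a b : L) (l : ℂ) :
    C.br (aeval C.D q a) b l = (q.eval (-l)) • C.br a b l := by
  induction q using Polynomial.induction_on' with
  | add p q hp hq => rw [map_add, LinearMap.add_apply, br_add_left, hp, hq, eval_add, add_smul]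
  | monomial n c =>
    rw [aeval_monomial, eval_monomial, Module.End.mul_apply, Module.algebraMap_end_apply,
      br_smul_left, mul_smul]
    congr 1
    induction n with
    | zero => simp
    | succ n ih => rw [pow_succ', Module.End.mul_apply, br_D_left, ih, smul_smul, pow_succ']

theorem br_poly_right (q : ℂ[X]) (a b : L) (l : ℂ) :
    C.br a (aeval C.D q b) l = aeval C.D (q.comp (X + Polynomial.C l)) (C.br a b l) := by
  induction q using Polynomial.induction_on' with
  | add p q hp hq => 
    rw [map_add, LinearMap.add_apply, br_add_right, hp, hq, add_comp, map_add, LinearMap.add_apply]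
  | monomial n c =>
    rw [aeval_monomial, monomial_comp, Module.End.mul_apply, Module.algebraMap_end_apply,
      br_smul_right, map_mul, aeval_C, Module.End.mul_apply, Module.algebraMap_end_apply]
    congr 1
    induction n with
    | zero => simp
    | succ n ih => 
      rw [pow_succ', Module.End.mul_apply, br_D_right, ih, pow_succ', map_mul,
        Module.End.mul_apply, map_add, aeval_X, aeval_C, LinearMap.add_apply,
        Module.algebraMap_end_apply]

theorem aux_binom (l m : ℂ) (M : ℕ) (x : ℕ → L) (hx : ∀ r, M ≤ r → x r = 0) :
    ∑ i ∈ Finset.range M, ∑ n ∈ Finset.range M,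
      ((l ^ i * ((Nat.factorial i : ℂ))⁻¹) * (m ^ n * ((Nat.factorial n : ℂ))⁻¹)) • x (i + n)
    = ∑ r ∈ Finset.range M, ((l + m) ^ r * ((Nat.factorial r : ℂ))⁻¹) • x r := by
  rw [← aux_flip M (fun i n => ((l ^ i * ((Nat.factorial i : ℂ))⁻¹) *
    (m ^ n * ((Nat.factorial n : ℂ))⁻¹)) • x (i + n))]
  · refine Finset.sum_congr rfl fun r _ => ?_
    rw [add_pow, Finset.sum_mul, Finset.sum_smul]
    refine Finset.sum_congr rfl fun i hi => ?_
    have hi' : i ≤ r := by simp at hi; omega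
    rw [Nat.add_sub_cancel' hi']
    congr 1
    rw [Nat.cast_choose ℂ hi']
    have h1 : ((Nat.factorial r : ℕ) : ℂ) ≠ 0 := by exact_mod_cast Nat.factorial_ne_zero _
    field_simp
  · intro j i h; rw [hx _ h, smul_zero]

theorem br_jacobi (a b c : L) (l m : ℂ) :
    C.br a (C.br b c m) l - C.br b (C.br a c l) m = C.br (C.br a b l) c (l + m) := by
  -- a uniform bound
  have unif : ∀ (y : L) (z : ℕ → L), (∃ N, ∀ n, N ≤ n → z n = 0) →
      ∃ N, ∀ r n, N ≤ r → C.prd r y (z n) = 0 := by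
    rintro y z ⟨N, hN⟩
    choose B hB using fun n => C.bound y (z n)
    refine ⟨(Finset.range N).sup B, fun r n hr => ?_⟩
    by_cases hn : N ≤ n
    · rw [hN n hn, map_zero]
    · exact hB n r ((Finset.le_sup (f := B) (by simpa using hn)).trans hr)
  have unif' : ∀ (y : L) (z : ℕ → L), (∃ N, ∀ n, N ≤ n → z n = 0) →
      ∃ N, ∀ r n, N ≤ r → C.prd r (z n) y = 0 := by
    rintro y z ⟨N, hN⟩
    choose B hB using fun n => C.bound (z n) y
    refine ⟨(Finset.range N).sup B, fun r n hr => ?_⟩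
    by_cases hn : N ≤ n
    · rw [hN n hn, map_zero, LinearMap.zero_apply]
    · exact hB n r ((Finset.le_sup (f := B) (by simpa using hn)).trans hr)
  obtain ⟨N1, h1⟩ := unif a (fun n => C.prd n b c) (C.bound b c)
  obtain ⟨N2, h2⟩ := unif b (fun n => C.prd n a c) (C.bound a c)
  obtain ⟨N3, h3⟩ := unif' c (fun n => C.prd n a b) (C.bound a b)
  obtain ⟨N4, h4⟩ := C.bound b c
  obtain ⟨N5, h5⟩ := C.bound a c
  obtain ⟨N6, h6⟩ := C.bound a b
  obtain ⟨N, hN⟩ : ∃ N, N = N1 + N2 + N3 + N4 + N5 + N6 := ⟨_, rfl⟩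
  set M := N + N with hM
  have e1 : C.br a (C.br b c m) l = ∑ i ∈ Finset.range M, ∑ n ∈ Finset.range M,
      ((l ^ i * ((Nat.factorial i : ℂ))⁻¹) * (m ^ n * ((Nat.factorial n : ℂ))⁻¹)) •
        C.prd i a (C.prd n b c) := by
    rw [C.br_eq b c m M fun n hn => h4 n (by omega), C.br_eq _ _ l M]
    · simp only [map_sum, map_smul, Finset.smul_sum, smul_smul]
    · intro r hr
      rw [map_sum]
      refine Finset.sum_eq_zero fun n _ => ?_
      rw [map_smul, h1 r n (by omega), smul_zero]
  have e2 : C.br b (C.br a c l) m = ∑ i ∈ Finset.range M, ∑ n ∈ Finset.range M,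
      ((l ^ i * ((Nat.factorial i : ℂ))⁻¹) * (m ^ n * ((Nat.factorial n : ℂ))⁻¹)) •
        C.prd n b (C.prd i a c) := by
    rw [C.br_eq a c l M fun n hn => h5 n (by omega), C.br_eq _ _ m M]
    · simp only [map_sum, map_smul, Finset.smul_sum, smul_smul]
      rw [Finset.sum_comm]
      refine Finset.sum_congr rfl fun i _ => Finset.sum_congr rfl fun n _ => ?_
      rw [mul_comm]
    · intro r hr
      rw [map_sum]
      refine Finset.sum_eq_zero fun n _ => ?_
      rw [map_smul, h2 r n (by omega), smul_zero]
  have e3 : C.br (C.br a b l) c (l + m) = ∑ j ∈ Finset.range M,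
      (l ^ j * ((Nat.factorial j : ℂ))⁻¹) • ∑ r ∈ Finset.range M,
        ((l + m) ^ r * ((Nat.factorial r : ℂ))⁻¹) • C.prd r (C.prd j a b) c := by
    rw [C.br_eq a b l M fun n hn => h6 n (by omega), C.br_eq _ _ (l + m) M]
    · simp only [map_sum, map_smul, LinearMap.sum_apply, LinearMap.smul_apply, Finset.smul_sum]
      rw [Finset.sum_comm]
      refine Finset.sum_congr rfl fun i _ => Finset.sum_congr rfl fun n _ => smul_comm _ _ _
    · intro r hr
      rw [map_sum, LinearMap.sum_apply]
      refine Finset.sum_eq_zero fun n _ => ?_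
      rw [map_smul, LinearMap.smul_apply, h3 r n (by omega), smul_zero]
  have e3' : C.br (C.br a b l) c (l + m) = ∑ j ∈ Finset.range M, ∑ i ∈ Finset.range M,
      ∑ n ∈ Finset.range M, (l ^ j * ((Nat.factorial j : ℂ))⁻¹) •
        ((l ^ i * ((Nat.factorial i : ℂ))⁻¹) * (m ^ n * ((Nat.factorial n : ℂ))⁻¹)) •
          C.prd (i + n) (C.prd j a b) c := by
    rw [e3]
    refine Finset.sum_congr rfl fun j _ => ?_
    rw [← aux_binom l m M (fun r => C.prd r (C.prd j a b) c) fun r hr => h3 r j (by omega)]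
    simp only [Finset.smul_sum]
  rw [e3', ← aux_flip M (fun j i => ∑ n ∈ Finset.range M, (l ^ j * ((Nat.factorial j : ℂ))⁻¹) •
        ((l ^ i * ((Nat.factorial i : ℂ))⁻¹) * (m ^ n * ((Nat.factorial n : ℂ))⁻¹)) •
          C.prd (i + n) (C.prd j a b) c), e1, e2, ← Finset.sum_sub_distrib]
  · refine Finset.sum_congr rfl fun s _ => ?_
    rw [Finset.sum_comm, ← Finset.sum_sub_distrib]
    refine Finset.sum_congr rfl fun n _ => ?_
    rw [← smul_sub, C.jacobi, Finset.smul_sum]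
    refine Finset.sum_congr rfl fun j hj => ?_
    have hj' : j ≤ s := by simp at hj; omega
    rw [show s + n - j = s - j + n by omega, smul_smul, smul_smul]
    congr 1
    rw [Nat.cast_choose ℂ hj']
    have hs : ((Nat.factorial s : ℕ) : ℂ) ≠ 0 := by exact_mod_cast Nat.factorial_ne_zero _
    have hl : l ^ s = l ^ j * l ^ (s - j) := by rw [← pow_add, Nat.add_sub_cancel' hj']
    rw [hl]
    field_simp
  · intro j i hji
    refine Finset.sum_eq_zero fun n _ => ?_
    by_cases hj : N ≤ j
    · rw [h6 j (by omega), map_zero, LinearMap.zero_apply, smul_zero, smul_zero]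
    · rw [h3 (i + n) j (by omega), smul_zero, smul_zero]

theorem br_of_poly (a b t : L) (p : ℂ[X][X])
    (h : ∀ n, C.prd n a b = (Nat.factorial n : ℂ) • aeval C.D (p.coeff n) t) (l : ℂ) :
    C.br a b l = aeval C.D (p.eval (Polynomial.C l)) t := by
  rw [C.br_eq a b l (p.natDegree + 1), eval_eq_sum_range, map_sum, LinearMap.sum_apply]
  · refine Finset.sum_congr rfl fun n _ => ?_
    have hs : ((Nat.factorial n : ℕ) : ℂ) ≠ 0 := by exact_mod_cast Nat.factorial_ne_zero _
    rw [h, smul_smul, mul_assoc, inv_mul_cancel₀ hs, mul_one, ← C_pow, mul_comm, ← smul_eq_C_mul,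
      map_smul, LinearMap.smul_apply]
  · intro n hn
    rw [h, coeff_eq_zero_of_natDegree_lt (by omega)]; simp

theorem br_skew_of_poly (a b t : L) (p : ℂ[X][X])
    (h : ∀ n, C.prd n a b = (Nat.factorial n : ℂ) • aeval C.D (p.coeff n) t) (l : ℂ) :
    C.br b a l = - aeval C.D (p.eval (-Polynomial.C l - X)) t := by
  set M := p.natDegree + 1 with hM
  have hz : ∀ n, M ≤ n → C.prd n a b = 0 := fun n hn => by
    rw [h, coeff_eq_zero_of_natDegree_lt (by omega)]; simp
  have hs : ∀ n, C.prd n b a = - ∑ j ∈ Finset.range M,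
      ((-1 : ℂ) ^ (n + j) * ((Nat.factorial j : ℂ))⁻¹) • (⇑C.D)^[j] (C.prd (n + j) a b) := by
    intro n
    rw [C.skew]
    congr 1
    apply finsum_eq_sum_of_support_subset
    intro j hj
    by_contra hc
    apply hj
    simp only [Finset.coe_range, Set.mem_Iio, not_lt] at hc
    beta_reduce
    rw [hz _ (by omega), iterate_map_zero, smul_zero]
  have hz' : ∀ n, M ≤ n → C.prd n b a = 0 := fun n hn => by
    rw [hs, Finset.sum_eq_zero, neg_zero]
    intro j _
    rw [hz _ (by omega), iterate_map_zero, smul_zero]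
  rw [C.br_eq b a l M hz']
  simp only [hs, smul_neg, Finset.sum_neg_distrib, Finset.smul_sum, smul_smul]
  rw [← aux_flip M (fun n j => (l ^ n * ((Nat.factorial n : ℂ))⁻¹ *
    ((-1 : ℂ) ^ (n + j) * ((Nat.factorial j : ℂ))⁻¹)) • (⇑C.D)^[j] (C.prd (n + j) a b))]
  · congr 1
    rw [eval_eq_sum_range, map_sum, LinearMap.sum_apply]
    refine Finset.sum_congr rfl fun r _ => ?_
    have e : (-Polynomial.C l - X : ℂ[X]) = Polynomial.C (-1) * (Polynomial.C l + X) := by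
      simp; ring
    rw [e, mul_pow, add_pow, Finset.mul_sum, Finset.mul_sum, map_sum, LinearMap.sum_apply]
    refine Finset.sum_congr rfl fun i hi => ?_
    have hi' : i ≤ r := by simp at hi; omega
    have e2 : p.coeff r * (Polynomial.C (-1) ^ r * (Polynomial.C l ^ i * X ^ (r - i) *
      ((r.choose i : ℕ) : ℂ[X]))) =
      Polynomial.C ((-1) ^ r * l ^ i * (r.choose i : ℂ)) * (X ^ (r - i) * p.coeff r) := by
      simp only [map_mul, map_pow, map_natCast]; ring
    rw [e2, ← smul_eq_C_mul, map_smul, LinearMap.smul_apply, map_mul, Module.End.mul_apply,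
      map_pow, aeval_X, Nat.add_sub_cancel' hi', h, ← Module.End.pow_apply, map_smul, smul_smul]
    congr 1
    rw [Nat.cast_choose ℂ hi']
    have h1 : ((Nat.factorial r : ℕ) : ℂ) ≠ 0 := by exact_mod_cast Nat.factorial_ne_zero _
    field_simp
  · intro j i hji
    rw [hz _ hji, iterate_map_zero, smul_zero]

end LieConformalAlgebra
namespace RankOneContext

variable {L : Type} [AddCommGroup L] [Module ℂ L] (C : RankOneContext L)

theorem prd_bas (i j t : ℤ) (h : i + j = t) (n : ℕ) :
    C.prd n (C.bas i) (C.bas j)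
      = (Nat.factorial n : ℂ) • aeval C.D ((C.sp i j).coeff n) (C.bas t) := by
  subst h
  rw [C.sp_brkt, aeval_endomorphism]
  simp only [Module.End.pow_apply]

theorem br_bas (i j t : ℤ) (h : i + j = t) (l : ℂ) :
    C.br (C.bas i) (C.bas j) l
      = aeval C.D ((C.sp i j).eval (Polynomial.C l)) (C.bas t) :=
  C.br_of_poly _ _ _ _ (C.prd_bas i j t h) l

theorem br_bas' (i j t : ℤ) (h : i + j = t) (l : ℂ) :
    C.br (C.bas j) (C.bas i) l
      = - aeval C.D ((C.sp i j).eval (-Polynomial.C l - X)) (C.bas t) :=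
  C.br_skew_of_poly _ _ _ _ (C.prd_bas i j t h) l

theorem faithful (i : ℤ) (hi : C.G i ≠ ⊥) (q : ℂ[X]) (h : aeval C.D q (C.bas i) = 0) : q = 0 := by
  have hl := C.bas_indep i hi
  rw [linearIndependent_iff'] at hl
  rw [aeval_endomorphism, Polynomial.sum_def] at h
  simp only [Module.End.pow_apply] at h
  have := hl q.support q.coeff h
  ext n
  by_cases hn : n ∈ q.support
  · simpa using this n hn
  · simpa using hn

theorem faithful' (i : ℤ) (hi : C.G i ≠ ⊥) (q q' : ℂ[X])
    (h : aeval C.D q (C.bas i) = aeval C.D q' (C.bas i)) : q = q' := by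
  rw [← sub_eq_zero]
  apply C.faithful i hi
  rw [map_sub, LinearMap.sub_apply, h, sub_self]

theorem br_ee (l : ℂ) : C.br (C.bas 0) (C.bas 0) l = 0 :=
  C.br_zero _ _ _ fun n => C.abelian0 n _ (C.bas_mem 0) _ (C.bas_mem 0)

theorem sp0 (i : ℤ) (hi : C.G i ≠ ⊥) : ∃ φ : ℂ[X], C.sp 0 i = φ.map Polynomial.C := by
  apply aux_const'
  intro l m
  apply C.faithful' i hi
  have J := C.br_jacobi (C.bas 0) (C.bas 0) (C.bas i) l m
  have e0 : C.br 0 (C.bas i) (l + m) = 0 := C.br_zero _ _ _ fun n => by simp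
  rw [C.br_ee, e0, C.br_bas 0 i i (zero_add i), C.br_bas 0 i i (zero_add i), C.br_poly_right,
    C.br_poly_right, C.br_bas 0 i i (zero_add i), C.br_bas 0 i i (zero_add i),
    ← Module.End.mul_apply, ← Module.End.mul_apply, ← map_mul, ← map_mul, sub_eq_zero] at J
  exact J

theorem eval_mapC (φ : ℂ[X]) (x : ℂ[X]) : (φ.map Polynomial.C).eval x = φ.comp x := by
  rw [eval_map]; rfl

theorem tdeg_C (P : ℂ[X]) : tdeg (Polynomial.C P) = P.natDegree := by
  by_cases h : P = 0
  · simp [h, tdeg]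
  · simp [tdeg, support_C h]

theorem tdeg_mapC (φ : ℂ[X]) : tdeg (φ.map Polynomial.C) = φ.natDegree := by
  unfold tdeg
  apply le_antisymm
  · apply Finset.sup_le
    intro n hn
    rw [coeff_map, natDegree_C, add_zero]
    apply le_natDegree_of_ne_zero
    rw [mem_support_iff, coeff_map] at hn
    intro h; rw [h] at hn; simp at hn
  · by_cases h : φ = 0
    · simp [h]
    · have : φ.natDegree ∈ (φ.map Polynomial.C).support := by
        rw [mem_support_iff, coeff_map]
        simpa using h
      refine le_trans ?_ (Finset.le_sup this)
      simp

end RankOneContext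

/-- for `k ∈ Supp₁(L)`: (1) `-k ∈ Supp₁(L)`; (2) `p_{-k,k}` does
not involve `λ`; (3) `deg p_{-k,k}(∂) + deg p_{0,k}(λ) ≤ 2`. -/
theorem supp1_symmetry_and_degree_bound
    {L : Type} [AddCommGroup L] [Module ℂ L] (C : RankOneContext L)
    (k : ℤ) (hk : C.G k ≠ ⊥) (hk1 : C.sp (-k) k ≠ 0) (hk0 : C.sp 0 k ≠ 0) :
    (C.G (-k) ≠ ⊥ ∧ C.sp k (-k) ≠ 0 ∧ C.sp 0 (-k) ≠ 0) ∧
    (C.sp (-k) k).natDegree = 0 ∧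
    tdeg (C.sp (-k) k) + tdeg (C.sp 0 k) ≤ 2 := by
  have hG0 := C.supp_zero
  have hGk : C.G (-k) ≠ ⊥ := fun h => hk1 (C.sp_zero _ _ (Or.inl h))
  obtain ⟨φ, hφ⟩ := C.sp0 k hk
  obtain ⟨γ, hγ⟩ := C.sp0 (-k) hGk
  have hφ0 : φ ≠ 0 := by rintro rfl; simp at hφ; exact hk0 hφ
  obtain ⟨p, hp⟩ : ∃ p, p = C.sp (-k) k := ⟨_, rfl⟩
  rw [← hp] at hk1
  have b_ab : ∀ l, C.br (C.bas (-k)) (C.bas k) l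
      = aeval C.D (p.eval (Polynomial.C l)) (C.bas 0) := fun l => by
    rw [hp]; exact C.br_bas _ _ _ (by ring) l
  have b_eb : ∀ l, C.br (C.bas 0) (C.bas k) l = (φ.eval l) • C.bas k := fun l => by
    rw [C.br_bas 0 k k (by ring), hφ, RankOneContext.eval_mapC, comp_C, aeval_C,
      Module.algebraMap_end_apply]
  have b_ea : ∀ l, C.br (C.bas 0) (C.bas (-k)) l = (γ.eval l) • C.bas (-k) := fun l => by
    rw [C.br_bas 0 (-k) (-k) (by ring), hγ, RankOneContext.eval_mapC, comp_C, aeval_C,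
      Module.algebraMap_end_apply]
  have b_be : ∀ l, C.br (C.bas k) (C.bas 0) l
      = - aeval C.D (φ.comp (-Polynomial.C l - X)) (C.bas k) := fun l => by
    rw [C.br_bas' 0 k k (by ring), hφ, RankOneContext.eval_mapC]
  -- first Jacobi identity
  have J1 : ∀ l m : ℂ, Polynomial.C (-φ.eval l) * p.eval (Polynomial.C m)
      = Polynomial.C (γ.eval l) * p.eval (Polynomial.C (l + m)) := by
    intro l m
    have J := C.br_jacobi (C.bas 0) (C.bas (-k)) (C.bas k) l m
    rw [b_ab, b_eb, b_ea, C.br_poly_right, C.br_ee, map_zero, C.br_smul_right, C.br_smul_left,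
      b_ab, b_ab, zero_sub, ← neg_smul] at J
    apply C.faithful' 0 hG0
    rw [← smul_eq_C_mul, ← smul_eq_C_mul, map_smul, map_smul]
    exact J
  have J1' : ∀ l : ℂ, Polynomial.C (Polynomial.C (-φ.eval l)) * p
      = Polynomial.C (Polynomial.C (γ.eval l)) * p.comp (X + Polynomial.C (Polynomial.C l)) := by
    intro l
    refine aux_ext_s11 _ _ Set.univ Set.infinite_univ fun m _ => ?_
    have := J1 l m
    rw [eval_mul, eval_C, eval_mul, eval_C, eval_comp, this]
    simp [add_comm]
  have hγφ : ∀ l, γ.eval l = - φ.eval l := by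
    intro l
    have h := congrArg leadingCoeff (J1' l)
    rw [leadingCoeff_mul, leadingCoeff_mul, leadingCoeff_comp (by simp), leadingCoeff_X_add_C,
      one_pow, mul_one, leadingCoeff_C, leadingCoeff_C] at h
    have h2 := mul_right_cancel₀ (leadingCoeff_ne_zero.2 hk1) h
    exact (C_injective h2).symm
  have hγ0 : γ ≠ 0 := by
    rintro rfl
    apply hφ0
    apply Polynomial.funext
    intro l
    have := hγφ l
    simp at this
    simpa using this
  obtain ⟨P, hP⟩ : ∃ P, p = Polynomial.C P := by
    refine ⟨p.eval 0, aux_ext_s11 _ _ {l | φ.eval l ≠ 0} ?_ fun l hl => ?_⟩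
    · have hfin : {l | φ.eval l = 0}.Finite := by
        by_contra hc
        exact hφ0 (eq_zero_of_infinite_isRoot _ hc)
      exact hfin.infinite_compl
    · have h := J1 l 0
      rw [hγφ, add_zero] at h
      have h2 : (Polynomial.C (-φ.eval l) : ℂ[X]) ≠ 0 := by simpa using hl
      have h3 := mul_left_cancel₀ h2 h
      rw [← h3]; simp
  have hP0 : P ≠ 0 := by rintro rfl; simp at hP; exact hk1 hP
  refine ⟨⟨hGk, ?_, ?_⟩, ?_, ?_⟩
  · intro h0
    apply hP0
    have h1 := C.br_bas' k (-k) 0 (by ring) 0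
    rw [h0, b_ab, hP] at h1
    simp only [eval_C, eval_zero, map_zero, LinearMap.zero_apply, neg_zero] at h1
    exact C.faithful 0 hG0 _ h1
  · rw [hγ]
    exact (Polynomial.map_ne_zero_iff C_injective).2 hγ0
  · rw [← hp, hP, natDegree_C]
  · rw [← hp, hP, hφ, RankOneContext.tdeg_C, RankOneContext.tdeg_mapC]
    have hdeg : (P.comp (-X) * φ).natDegree = P.natDegree + φ.natDegree := by
      rw [natDegree_mul (comp_neg_X_eq_zero_iff.not.2 hP0) hφ0, natDegree_comp]
      simp
    rw [← hdeg]
    apply aux_final _ (fun m => ((C.sp k k).eval (Polynomial.C m)).eval 0)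
      (fun l => ((C.sp (-k) (k + k)).eval (Polynomial.C l)).eval (-l))
    intro l m
    have sm : ∀ c : ℂ, c • C.bas k = aeval C.D (Polynomial.C c) (C.bas k) := fun c => by
      rw [aeval_C, Module.algebraMap_end_apply]
    have J := C.br_jacobi (C.bas (-k)) (C.bas k) (C.bas k) l m
    rw [b_ab, hP, eval_C, C.br_poly_right, C.br_poly_left, b_eb, b_be, C.br_bas k k _ rfl,
      C.br_poly_right, C.br_bas (-k) (k + k) k (by ring), map_neg,
      ← Module.End.mul_apply, ← Module.End.mul_apply, ← map_mul, ← map_mul, sub_neg_eq_add,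
      ← LinearMap.add_apply, ← map_add, smul_smul, sm] at J
    have J2 := congrArg (eval (-l)) (C.faithful' k hk _ _ J)
    simp only [eval_add, eval_mul, eval_comp, eval_X, eval_C, eval_sub, eval_neg] at J2 ⊢
    rw [neg_add_cancel, show -m - -l = l - m by ring] at J2
    rw [← sub_eq_of_eq_add J2.symm]
    ring_nf
end
end

section
/- Let n ≥ 3 be an integer and ε ∈ {1,−1}. Then there do not exist polynomials g, h ∈ ℂ[x,y] such that, as polynomials in the three variables ∂, λ, μ, (λ+μ)ⁿ + ε(∂+μ)ⁿ = (∂+λ+2μ)·g(∂+λ, μ)·h(∂, λ). -/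
open scoped BigOperators Classical ENNReal
open Polynomial

noncomputable section

theorem nfps_aux (n : ℕ) (ε : ℂ) (g h : MvPolynomial (Fin 2) ℂ)
    (H : (MvPolynomial.X 1 + MvPolynomial.X 2 : MvPolynomial (Fin 3) ℂ) ^ n
          + MvPolynomial.C ε * (MvPolynomial.X 0 + MvPolynomial.X 2) ^ n
        = (MvPolynomial.X 0 + MvPolynomial.X 1 + 2 * MvPolynomial.X 2)
            * (MvPolynomial.aeval
                ![MvPolynomial.X 0 + MvPolynomial.X 1, MvPolynomial.X 2] g)
            * (MvPolynomial.aeval ![MvPolynomial.X 0, MvPolynomial.X 1] h)) :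
    ∃ a b : ℂ → ℂ, ∀ t m : ℂ, (t + m) ^ n + ε * (-t + m) ^ n = a m * b t := by
  refine ⟨fun m => 2 * m * MvPolynomial.aeval ![(0 : ℂ), m] g,
    fun t => MvPolynomial.aeval ![-t, t] h, fun t m => ?_⟩
  have K := congrArg (MvPolynomial.aeval (R := ℂ) ![-t, t, m]) H
  have e1 : ∀ p : MvPolynomial (Fin 2) ℂ, MvPolynomial.aeval (R := ℂ) ![-t, t, m]
      (MvPolynomial.aeval ![(MvPolynomial.X 0 + MvPolynomial.X 1 : MvPolynomial (Fin 3) ℂ),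
        MvPolynomial.X 2] p) = MvPolynomial.aeval ![(0 : ℂ), m] p := by
    intro p
    rw [← AlgHom.comp_apply]
    congr 1
    ext i
    fin_cases i <;> simp
  have e2 : ∀ p : MvPolynomial (Fin 2) ℂ, MvPolynomial.aeval (R := ℂ) ![-t, t, m]
      (MvPolynomial.aeval ![(MvPolynomial.X 0 : MvPolynomial (Fin 3) ℂ),
        MvPolynomial.X 1] p) = MvPolynomial.aeval ![-t, t] p := by
    intro p
    rw [← AlgHom.comp_apply]
    congr 1
    ext i
    fin_cases i <;> simp
  rw [map_mul, map_mul, e1, e2] at K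
  simpa [map_ofNat] using K

theorem nfps_ineq1 (n : ℕ) (hn : 3 ≤ n) : (3 : ℤ) ^ n + 1 < 4 ^ n := by
  induction n, hn using Nat.le_induction with
  | base => norm_num
  | succ k hk ih => rw [pow_succ, pow_succ]; linarith [pow_pos (show (0:ℤ) < 4 by norm_num) k]

theorem nfps_ineq2 (n : ℕ) (hn : 3 ≤ n) : (8 : ℤ) ^ n < (3 ^ n - 1) * (3 ^ n - 1) := by
  induction n, hn using Nat.le_induction with
  | base => norm_num
  | succ k hk ih =>
    rw [pow_succ, pow_succ]
    have := one_le_pow₀ (show (1:ℤ) ≤ 3 by norm_num) (n := k)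
    nlinarith [pow_pos (show (0:ℤ) < 8 by norm_num) k]

/-- for `n ≥ 3` and `ε = ±1` there are no polynomials
`g, h ∈ ℂ[x,y]` with
`(λ+μ)ⁿ + ε(∂+μ)ⁿ = (∂+λ+2μ) g(∂+λ, μ) h(∂, λ)` in `ℂ[∂,λ,μ]`
(variables `X 0 = ∂`, `X 1 = λ`, `X 2 = μ`). -/
theorem no_factorization_of_power_sum
    (n : ℕ) (hn : 3 ≤ n) (ε : ℂ) (hε : ε = 1 ∨ ε = -1) :
    ¬ ∃ g h : MvPolynomial (Fin 2) ℂ,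
      (MvPolynomial.X 1 + MvPolynomial.X 2 : MvPolynomial (Fin 3) ℂ) ^ n
          + MvPolynomial.C ε * (MvPolynomial.X 0 + MvPolynomial.X 2) ^ n
        = (MvPolynomial.X 0 + MvPolynomial.X 1 + 2 * MvPolynomial.X 2)
            * (MvPolynomial.aeval
                ![MvPolynomial.X 0 + MvPolynomial.X 1, MvPolynomial.X 2] g)
            * (MvPolynomial.aeval ![MvPolynomial.X 0, MvPolynomial.X 1] h) := by
  rintro ⟨g, h, H⟩
  obtain ⟨a, b, K⟩ := nfps_aux n ε g h H
  rcases hε with rfl | rfl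
  · have k1 := K 0 1
    have k2 := K 0 2
    have k3 := K 1 1
    have k4 := K 1 2
    have hn0 : n ≠ 0 := by omega
    norm_num [hn0] at k1 k2 k3 k4
    have e : (2 : ℂ) * (3 ^ n + 1) = (2 ^ n + 2 ^ n) * 2 ^ n := by
      linear_combination (3 ^ n + 1) * k1 + a 1 * b 0 * k4 - (2 ^ n + 2 ^ n) * k3 - a 1 * b 1 * k2
    have q : (4 : ℂ) ^ n = 2 ^ n * 2 ^ n := by rw [← mul_pow]; norm_num
    have e' : ((3 : ℤ) ^ n + 1 : ℤ) = 4 ^ n := by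
      have : (3 : ℂ) ^ n + 1 = 4 ^ n := by rw [q]; linear_combination e / 2
      exact_mod_cast this
    exact absurd e' (nfps_ineq1 n hn).ne
  · have k1 := K 1 1
    have k2 := K 1 2
    have k3 := K 2 1
    have k4 := K 2 2
    have hn0 : n ≠ 0 := by omega
    norm_num [hn0] at k1 k2 k3 k4
    have e : (2 : ℂ) ^ n * 4 ^ n = (3 ^ n + -1) * (3 ^ n + -(-1) ^ n) := by
      rw [k1, k2, k3, k4]; ring
    have q : (8 : ℂ) ^ n = 2 ^ n * 4 ^ n := by rw [← mul_pow]; norm_num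
    have e' : (8 : ℤ) ^ n = (3 ^ n - 1) * (3 ^ n - (-1) ^ n) := by
      have : (8 : ℂ) ^ n = (3 ^ n - 1) * (3 ^ n - (-1) ^ n) := by rw [q]; linear_combination e
      exact_mod_cast this
    have i2 := nfps_ineq2 n hn
    have := one_le_pow₀ (show (1:ℤ) ≤ 3 by norm_num) (n := n)
    rcases neg_one_pow_eq_or ℤ n with h1 | h1 <;> rw [h1] at e' <;> nlinarith
end
end
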